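/- For n, q ≥ 1, the number of (q-1)-multichains of the poset ONC_{2n+1} = [e, (1 2 ... 2n+1)]_3 with prescribed rank jump vector (r_1,...,r_q) (with r_1 + ... + r_q = n) equals (2n+1)^{q-1} · Π_{i=1}^{q} [1/(2n+1-r_i)] · C(2n+1-r_i, r_i). -/

import Mathlib

open Equiv Equiv.Perm

/-- The word length of `x` with respect to a generating set `T`. -/
noncomputable def lenT {G : Type*} [Group G] (T : Set G) (x : G) : ℕ :=
  sInf {n | ∃ l : List G, (∀ t ∈ l, t ∈ T) ∧ l.prod = x ∧ l.length = n}

/-- The `T`-prefix order. -/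
def leT {G : Type*} [Group G] (T : Set G) (x y : G) : Prop :=
  lenT T y = lenT T x + lenT T (x⁻¹ * y)

/-- The set of 3-cycles of the symmetric group on `Fin N`. -/
def threeCycles (N : ℕ) : Set (Perm (Fin N)) := {σ | σ.IsThreeCycle}

/-- The set of transpositions of the symmetric group on `Fin N`. -/
def transpositions (N : ℕ) : Set (Perm (Fin N)) := {σ | σ.IsSwap}

/-- The number of odd cycles of a permutation, counting fixed points. -/
def ocyc {N : ℕ} (x : Perm (Fin N)) : ℕ :=
  (x.cycleType.filter (fun n => Odd n)).card + (N - x.cycleType.sum)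

set_option linter.unusedSectionVars false
open PowerSeries in
theorem resLem {R : Type*} [CommRing R] [NoZeroDivisors R] [CharZero R]
    (A T : PowerSeries R) (hA : constantCoeff A = 0) (h : A * T = X) (m : ℕ) :
    coeff m (T ^ (m+1) * derivative R A) = if m = 0 then 1 else 0 := by
  have hd : derivative R A * T + A * derivative R T = 1 := by
    have := congrArg (derivative R) h
    rw [Derivation.leibniz, derivative_X] at this
    simp only [smul_eq_mul] at this
    linear_combination this
  rcases m with _ | m
  · have : T ^ (0+1) * derivative R A = 1 - A * derivative R T := by linear_combination hd
    rw [this]; simp [hA]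
  · have e : T ^ (m+1+1) * derivative R A = T^(m+1) - X * (T^m * derivative R T) := by
      rw [← h]; linear_combination T^(m+1) * hd
    have e2 : ((m+1 : ℕ) : R) * coeff (m+1) (X * (T^m * derivative R T)) =
        ((m+1 : ℕ) : R) * coeff (m+1) (T^(m+1)) := by
      have h3 : derivative R (T^(m+1)) = ((m+1 : ℕ) : PowerSeries R) * (T^m * derivative R T) := by
        rw [Derivation.leibniz_pow]; simp
      have h4 := congrArg (coeff m) h3
      rw [coeff_succ_X_mul]
      rw [coeff_derivative, ← map_natCast (C (R := R)), coeff_C_mul] at h4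
      rw [← h4]; push_cast; ring
    have hne : ((m+1 : ℕ) : R) ≠ 0 := by exact_mod_cast Nat.succ_ne_zero m
    rw [e, map_sub, mul_left_cancel₀ hne e2]; simp

open PowerSeries in
theorem lagr {R : Type*} [CommRing R] [NoZeroDivisors R] [CharZero R]
    (A T : PowerSeries R) (hA : constantCoeff A = 0) (h : A * T = X) (n : ℕ) (G : Polynomial R)
    (hG : (X : PowerSeries R)^(n+1) ∣ T^(n+1) * Polynomial.aeval A G - 1) :
    ((n+1 : ℕ) : R) * coeff (n+1) A = G.coeff n := by
  have h1 : coeff n (T^(n+1) * Polynomial.aeval A G * derivative R A) = coeff n (derivative R A) := by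
    obtain ⟨w, hw⟩ := hG
    have : T^(n+1) * Polynomial.aeval A G * derivative R A = derivative R A + X^(n+1) * (w * derivative R A) := by
      linear_combination derivative R A * hw
    rw [this, map_add, coeff_X_pow_mul']; simp
  rw [coeff_derivative] at h1
  have h2 : ∀ k, coeff n (T^(n+1) * A^k * derivative R A) = if k = n then 1 else 0 := by
    intro k
    by_cases hk : k ≤ n
    · obtain ⟨d, rfl⟩ := Nat.exists_eq_add_of_le hk
      have : T^(k+d+1) * A^k * derivative R A = X^k * (T^(d+1) * derivative R A) := by
        rw [← h]; ring
      rw [this, add_comm k d, coeff_X_pow_mul, resLem A T hA h]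
      congr 1; simp
    · have hx : X ∣ A := X_dvd_iff.mpr hA
      obtain ⟨B, rfl⟩ := hx
      have : T^(n+1) * (X*B)^k * derivative R (X*B) = X^k * (B^k * T^(n+1) * derivative R (X*B)) := by ring
      rw [this, coeff_X_pow_mul', if_neg hk, if_neg (by omega)]
  rw [Polynomial.aeval_eq_sum_range, Finset.mul_sum, Finset.sum_mul, map_sum] at h1
  have h3 : ∀ k, coeff n (T^(n+1) * (G.coeff k • A^k) * derivative R A) = if k = n then G.coeff k else 0 := by
    intro k
    rw [mul_smul_comm, smul_mul_assoc, map_smul, h2]; simp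
  simp only [h3] at h1
  push_cast
  rw [mul_comm, ← h1, Finset.sum_ite_eq']
  split_ifs with hh
  · rfl
  · rw [Polynomial.coeff_eq_zero_of_natDegree_lt]
    simpa using hh

/-- Lucas numbers coefficients -/
def luc : ℕ → ℕ → ℕ
  | 0, 0 => 2
  | 0, _+1 => 0
  | 1, 0 => 1
  | 1, _+1 => 0
  | n+2, 0 => luc (n+1) 0
  | n+2, r+1 => luc (n+1) (r+1) + luc n r

theorem luc_zero (N r : ℕ) (h : N < 2 * r) : luc N r = 0 := by
  induction N using Nat.strong_induction_on generalizing r with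
  | _ N ih =>
    match N, r, h with
    | 0, r+1, _ => rfl
    | 1, r+1, _ => rfl
    | n+2, r+1, h =>
      rw [luc, ih (n+1) (by omega) _ (by omega), ih n (by omega) _ (by omega)]

theorem luc_eq (N r : ℕ) (hN : r + 1 ≤ N) : luc N (r) * (N - r) = N * Nat.choose (N - r) r := by
  have h0 : ∀ N, luc (N+1) 0 = 1 := by
    intro N; induction N with
    | zero => rfl
    | succ n ih => rw [luc, ih]
  have key : ∀ N r, 1 ≤ N → r + 1 ≤ N →
      luc (N+1) (r+1) = Nat.choose (N - r) (r+1) + Nat.choose (N - r - 1) r := by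
    intro N
    induction N using Nat.strong_induction_on with
    | _ N ih =>
      intro r h1 h2
      match N, r, h1, h2 with
      | 1, 0, _, _ => rfl
      | n+2, 0, _, _ =>
        rw [luc, ih (n+1) (by omega) _ (by omega) (by omega), h0]
        simp
      | n+2, r+1, _, h2 =>
        rw [luc]
        by_cases hh : r + 2 ≤ n + 1
        · rw [ih (n+1) (by omega) _ (by omega) (by omega), ih n (by omega) _ (by omega) (by omega)]
          obtain ⟨d, rfl⟩ : ∃ d, n = r + 1 + d := ⟨n - r - 1, by omega⟩
          have e1 : r + 1 + d + 1 - (r+1) = d + 1 := by omega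
          have e2 : r + 1 + d + 2 - (r+1) = d + 2 := by omega
          have e3 : r + 1 + d - r = d + 1 := by omega
          rw [e1, e2, e3]
          simp only [Nat.add_sub_cancel, show d + 2 - 1 = d + 1 from rfl]
          rw [Nat.choose_succ_succ (d+1) (r+1), Nat.choose_succ_succ d r]
          ring
        · have : n = r := by omega
          subst this
          rw [luc_zero _ _ (by omega)]
          by_cases hn : n = 0
          · subst hn; rfl
          · rw [luc_zero _ _ (by omega), Nat.choose_eq_zero_of_lt (by omega), Nat.choose_eq_zero_of_lt (by omega)]
  match N, r, hN with
  | N+1, 0, _ => simp [h0]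
  | N+1, r+1, h =>
    rw [key N r (by omega) (by omega)]
    obtain ⟨d, rfl⟩ : ∃ d, N = r + 1 + d := ⟨N - r - 1, by omega⟩
    have e1 : r + 1 + d - r = d + 1 := by omega
    have e2 : r + 1 + d + 1 - (r+1) = d + 1 := by omega
    rw [e1, e2, Nat.add_sub_cancel]
    have := Nat.add_one_mul_choose_eq d r
    nlinarith [this]

open PowerSeries in
theorem luc_series {S : Type*} [CommRing S] (s D : S) (h : D + s * D^2 = 1) (N M : ℕ) (hM : N ≤ M) :
    D^N * (∑ r ∈ Finset.range (M+1), (luc N r : S) * s^r) = 1 + (D-1)^N := by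
  induction N using Nat.strong_induction_on generalizing M with
  | _ N ih =>
    match N with
    | 0 =>
      rw [Finset.sum_range_succ']
      simp [luc]; norm_num
    | 1 =>
      rw [Finset.sum_range_succ']
      simp [luc]
    | n+2 =>
      have i1 := ih (n+1) (by omega) M (by omega)
      obtain ⟨M, rfl⟩ : ∃ M', M = M' + 1 := ⟨M-1, by omega⟩
      have i2 := ih n (by omega) M (by omega)
      rw [Finset.sum_range_succ'] at i1 ⊢
      have : ∑ k ∈ Finset.range (M+1), (luc (n+2) (k+1) : S) * s^(k+1) =
        ∑ k ∈ Finset.range (M+1), (luc (n+1) (k+1) : S) * s^(k+1) + s * ∑ k ∈ Finset.range (M+1), (luc n k : S) * s^k := by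
        rw [Finset.mul_sum, ← Finset.sum_add_distrib]
        apply Finset.sum_congr rfl
        intro k _
        rw [luc]; push_cast; ring
      rw [this, luc]
      linear_combination D * i1 + s * D^2 * i2 + (1+(D-1)^n) * h

theorem coefG {ι : Type*} [Fintype ι] [DecidableEq ι] (N : ℕ) (r : ι → ℕ) (hr : ∀ i, r i ≤ N) :
    MvPolynomial.coeff (Finsupp.equivFunOnFinite.symm r) ((∏ j : ι, ∑ k ∈ Finset.range (N+1),
      (luc N k : Polynomial (MvPolynomial ι ℚ)) *
       (Polynomial.C (MvPolynomial.X j) * Polynomial.X^2)^k).coeff (2 * ∑ i, r i))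
     = ∏ i, (luc N (r i) : ℚ) := by
  classical
  rw [Finset.prod_univ_sum, Polynomial.finsetSum_coeff, MvPolynomial.coeff_sum]
  have : ∀ p : ι → ℕ, MvPolynomial.coeff (Finsupp.equivFunOnFinite.symm r) ((∏ j : ι, 
      (luc N (p j) : Polynomial (MvPolynomial ι ℚ)) *
       (Polynomial.C (MvPolynomial.X j) * Polynomial.X^2)^(p j)).coeff (2 * ∑ i, r i)) =
       if p = r then ∏ i, (luc N (r i) : ℚ) else 0 := by
    intro p
    have e : (∏ j : ι, (luc N (p j) : Polynomial (MvPolynomial ι ℚ)) *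
       (Polynomial.C (MvPolynomial.X j) * Polynomial.X^2)^(p j)) =
       Polynomial.C (MvPolynomial.monomial (Finsupp.equivFunOnFinite.symm p) (∏ i, (luc N (p i) : ℚ))) * Polynomial.X ^ (2 * ∑ i, p i) := by
      simp only [mul_pow, Finset.prod_mul_distrib]
      rw [MvPolynomial.monomial_eq]
      simp only [map_mul, map_prod, ← pow_mul, Finset.mul_sum, Finset.prod_pow_eq_pow_sum]
      rw [Finsupp.prod_fintype _ _ (by simp)]
      simp [mul_assoc]
    rw [e, Polynomial.coeff_C_mul_X_pow]
    by_cases hp : p = r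
    · subst hp; simp
    · rw [if_neg hp]
      split_ifs
      · rw [MvPolynomial.coeff_monomial, if_neg]
        simpa using hp
      · simp
  simp only [this]
  rw [Finset.sum_ite_eq', if_pos]
  simp [Fintype.mem_piFinset]
  intro i; have := hr i; omega

open PowerSeries in
theorem algMain {ι : Type*} [Fintype ι] [DecidableEq ι]
    (E : Finset ι → PowerSeries (MvPolynomial ι ℚ))
    (h0 : ∀ J, constantCoeff (E J) = 0)
    (hX : E Finset.univ = X)
    (hE : ∀ J j, j ∉ J → E J = E (insert j J) + C (MvPolynomial.X j) * (E J * E {j} * E {j}))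
    (n : ℕ) (r : ι → ℕ) (hr : 2 * ∑ i, r i = n) :
    ((n+1 : ℕ) : ℚ) * MvPolynomial.coeff (Finsupp.equivFunOnFinite.symm r) (coeff (n+1) (E ∅)) =
      ∏ i, (luc (n+1) (r i) : ℚ) := by
  classical
  set A := E ∅ with hAd
  set D : ι → PowerSeries (MvPolynomial ι ℚ) := fun j => 1 - C (MvPolynomial.X j) * E {j}^2 with hD
  have hJ : ∀ J : Finset ι, E J = A * ∏ j ∈ J, D j := by
    intro J
    induction J using Finset.induction_on with
    | empty => simp [hAd]
    | insert j J hj ih =>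
      rw [Finset.prod_insert hj]
      have := hE J j hj
      have e : E (insert j J) = E J * D j := by rw [hD]; linear_combination -this
      rw [e, ih]; ring
  have hT : A * ∏ j, D j = X := by rw [← hJ, hX]
  have hj : ∀ j, E {j} = A * D j := by intro j; rw [hJ]; simp
  have hDj : ∀ j, D j + (C (MvPolynomial.X j) * A^2) * D j ^2 = 1 := by
    intro j
    have h1 : D j = 1 - C (MvPolynomial.X j) * E {j}^2 := rfl
    have h2 := hj j
    rw [h2] at h1
    linear_combination h1
  have hle : ∀ i, r i ≤ n + 1 := by
    intro i
    have := Finset.single_le_sum (f := r) (fun i _ => Nat.zero_le _) (Finset.mem_univ i)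
    omega
  have := lagr A (∏ j, D j) (h0 _) hT n (∏ j : ι, ∑ k ∈ Finset.range (n+1+1),
      (luc (n+1) k : Polynomial (MvPolynomial ι ℚ)) *
       (Polynomial.C (MvPolynomial.X j) * Polynomial.X^2)^k) ?_
  · have h2 := congrArg (MvPolynomial.coeff (Finsupp.equivFunOnFinite.symm r)) this
    subst hr
    rw [coefG _ _ hle] at h2
    rw [← h2, ← map_natCast (MvPolynomial.C (σ := ι) (R := ℚ)), MvPolynomial.coeff_C_mul]
  · have e : (∏ j, D j)^(n+1) * Polynomial.aeval A (∏ j : ι, ∑ k ∈ Finset.range (n+1+1),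
      (luc (n+1) k : Polynomial (MvPolynomial ι ℚ)) *
       (Polynomial.C (MvPolynomial.X j) * Polynomial.X^2)^k) = ∏ j, (1 + (D j - 1)^(n+1)) := by
      rw [map_prod, ← Finset.prod_pow, ← Finset.prod_mul_distrib]
      apply Finset.prod_congr rfl
      intro j _
      rw [← luc_series _ (D j) (hDj j) (n+1) (n+1) le_rfl]
      simp only [map_sum, map_mul, map_pow, map_natCast, Polynomial.aeval_C, Polynomial.aeval_X]
      rfl
    rw [e]
    have hx : ∀ j, (X : PowerSeries (MvPolynomial ι ℚ))^(n+1) ∣ (D j - 1)^(n+1) := by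
      intro j
      apply pow_dvd_pow_of_dvd
      have : X ∣ E {j} := X_dvd_iff.mpr (h0 _)
      obtain ⟨w, hw⟩ := this
      refine ⟨- C (MvPolynomial.X j) * w * E {j}, ?_⟩
      have h1 : D j = 1 - C (MvPolynomial.X j) * E {j}^2 := rfl
      rw [h1]
      linear_combination - C (MvPolynomial.X j) * E {j} * hw
    have : ∀ s : Finset ι, (X : PowerSeries (MvPolynomial ι ℚ))^(n+1) ∣ ∏ j ∈ s, (1 + (D j - 1)^(n+1)) - 1 := by
      intro s
      induction s using Finset.induction_on with
      | empty => simp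
      | insert j s hjs ih =>
        rw [Finset.prod_insert hjs]
        obtain ⟨w, hw⟩ := ih
        obtain ⟨v, hv⟩ := hx j
        exact ⟨w + v * (∏ j ∈ s, (1 + (D j - 1)^(n+1))), by linear_combination hw + hv * (∏ j ∈ s, (1 + (D j - 1)^(n+1)))⟩
    exact this _

open PowerSeries in
/-- exponential generating function -/
noncomputable def egf {R : Type*} [CommRing R] [Algebra ℚ R] (b : ℕ → R) : PowerSeries R :=
  PowerSeries.mk fun n => algebraMap ℚ R (1 / (n.factorial : ℚ)) * b n

open PowerSeries in
theorem egf_deriv {R : Type*} [CommRing R] [Algebra ℚ R] (b : ℕ → R) :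
    derivative R (egf b) = egf (fun n => b (n+1)) := by
  ext n
  rw [coeff_derivative, egf, egf, coeff_mk, coeff_mk]
  have : algebraMap ℚ R (1 / ((n+1).factorial : ℚ)) * ((n:R)+1) = algebraMap ℚ R (1 / (n.factorial : ℚ)) := by
    have e : ((n:R)+1) = algebraMap ℚ R ((n:ℚ)+1) := by simp
    rw [e, ← map_mul]
    congr 1
    rw [Nat.factorial_succ]; push_cast; field_simp
  rw [← this]; ring

open PowerSeries in
theorem egf_prod_deriv {K : Type*} [DecidableEq K] {R : Type*} [CommRing R] [Algebra ℚ R]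
    (b : K → ℕ → R) (s : Finset K) : derivative R (∏ k ∈ s, egf (b k)) =
      ∑ l ∈ s, ∏ k ∈ s, egf (fun n => b k (if k = l then n+1 else n)) := by
  induction s using Finset.induction_on with
  | empty => simp
  | insert j s hj ih =>
    rw [Finset.prod_insert hj, Derivation.leibniz, ih, Finset.sum_insert hj, Finset.prod_insert hj, egf_deriv]
    simp only [if_true, smul_eq_mul]
    have e1 : ∏ k ∈ s, egf (fun n => b k (if k = j then n+1 else n)) = ∏ k ∈ s, egf (b k) := by
      apply Finset.prod_congr rfl
      intro k hk
      have : k ≠ j := by rintro rfl; exact hj hk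
      simp [this]
    have e2 : ∑ l ∈ s, ∏ k ∈ insert j s, egf (fun n => b k (if k = l then n+1 else n)) =
       egf (b j) * ∑ l ∈ s, ∏ k ∈ s, egf (fun n => b k (if k = l then n+1 else n)) := by
      rw [Finset.mul_sum]
      apply Finset.sum_congr rfl
      intro l hl
      rw [Finset.prod_insert hj]
      have : j ≠ l := by rintro rfl; exact hj hl
      simp [this]
    rw [e1, e2]; ring

open PowerSeries in
theorem egf_prod {K : Type*} [Fintype K] [DecidableEq K] {R : Type*} [CommRing R] [Algebra ℚ R]
    (N : ℕ) (b : K → ℕ → R) :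
    ∑ κ : Fin N → K, ∏ k, b k (Finset.univ.filter (fun x => κ x = k)).card =
      (N.factorial : R) * coeff N (∏ k, egf (b k)) := by
  induction N generalizing b with
  | zero =>
    simp [egf]
  | succ N ih =>
    have h1 : ((N+1).factorial : R) * coeff (N+1) (∏ k, egf (b k)) =
       (N.factorial : R) * coeff N (derivative R (∏ k, egf (b k))) := by
      rw [coeff_derivative, Nat.factorial_succ]; push_cast; ring
    rw [h1, egf_prod_deriv, map_sum, Finset.mul_sum]
    simp only [← ih]
    rw [← (Fin.consEquiv (fun _ => K)).sum_comp, Fintype.sum_prod_type]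
    apply Finset.sum_congr rfl
    intro l _
    apply Finset.sum_congr rfl
    intro κ _
    apply Finset.prod_congr rfl
    intro k _
    congr 1
    rw [Fin.card_filter_univ_succ]
    simp only [Fin.consEquiv, Equiv.coe_fn_mk, Fin.cons_zero, Fin.cons_succ]
    simp only [eq_comm (a := l)]

section LA
variable {V : Type} [Fintype V] [DecidableEq V]

/-- functions fixed by a permutation -/
def FixS (y : Perm V) : Submodule ℚ (V → ℚ) where
  carrier := {f | ∀ x, f (y x) = f x}
  add_mem' := by intro f g hf hg x; simp [hf x, hg x]
  zero_mem' := by intro x; rfl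
  smul_mem' := by intro c f hf x; simp [hf x]

theorem mem_FixS {y : Perm V} {f : V → ℚ} : f ∈ FixS y ↔ ∀ x, f (y x) = f x := Iff.rfl

/-- codimension of the fixed space -/
noncomputable def cod (y : Perm V) : ℕ := Fintype.card V - Module.finrank ℚ (FixS y)

theorem fix_add_cod (y : Perm V) : Module.finrank ℚ (FixS y) + cod y = Fintype.card V := by
  have : Module.finrank ℚ (FixS y) ≤ Module.finrank ℚ (V → ℚ) := Submodule.finrank_le _
  rw [Module.finrank_pi] at this
  unfold cod; omega

theorem cod_one : cod (1 : Perm V) = 0 := by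
  have : FixS (1 : Perm V) = ⊤ := by
    rw [eq_top_iff]; intro f _ x; rfl
  unfold cod
  rw [this, finrank_top, Module.finrank_pi]; omega

theorem inf_dim (U W : Submodule ℚ (V → ℚ)) :
    Module.finrank ℚ U + Module.finrank ℚ W ≤ Module.finrank ℚ (U ⊓ W : Submodule ℚ (V → ℚ)) + Fintype.card V := by
  have h := Submodule.finrank_sup_add_finrank_inf_eq U W
  have : Module.finrank ℚ (U ⊔ W : Submodule ℚ (V → ℚ)) ≤ Module.finrank ℚ (V → ℚ) := Submodule.finrank_le _
  rw [Module.finrank_pi] at this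
  omega

theorem inf_dim_eq (U W : Submodule ℚ (V → ℚ))
    (h : Module.finrank ℚ (U ⊓ W : Submodule ℚ (V → ℚ)) + Fintype.card V ≤ Module.finrank ℚ U + Module.finrank ℚ W) :
    U ⊔ W = ⊤ := by
  have h := Submodule.finrank_sup_add_finrank_inf_eq U W
  apply Submodule.eq_top_of_finrank_eq
  have : Module.finrank ℚ (U ⊔ W : Submodule ℚ (V → ℚ)) ≤ Module.finrank ℚ (V → ℚ) := Submodule.finrank_le _
  rw [Module.finrank_pi] at this ⊢
  omega

theorem FixS_inf_le (x y : Perm V) : FixS x ⊓ FixS y ≤ FixS (x * y) := by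
  intro f hf v
  rw [Perm.mul_apply, hf.1, hf.2]

theorem cod_mul_le (x y : Perm V) : cod (x * y) ≤ cod x + cod y := by
  have h1 := Submodule.finrank_mono (FixS_inf_le x y)
  have h2 := inf_dim (FixS x) (FixS y)
  have := fix_add_cod x
  have := fix_add_cod y
  have := fix_add_cod (x*y)
  omega

theorem cod_prod_le (l : List (Perm V)) : cod l.prod ≤ (l.map cod).sum := by
  induction l with
  | nil => simp [cod_one]
  | cons x l ih =>
    rw [List.prod_cons, List.map_cons, List.sum_cons]
    have := cod_mul_le x l.prod
    omega

/-- functions fixed by all of a list -/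
def FixL (l : List (Perm V)) : Submodule ℚ (V → ℚ) where
  carrier := {f | ∀ y ∈ l, f ∈ FixS y}
  add_mem' := by intro f g hf hg y hy; exact add_mem (hf y hy) (hg y hy)
  zero_mem' := by intro y _; exact zero_mem _
  smul_mem' := by intro c f hf y hy; exact Submodule.smul_mem _ _ (hf y hy)

theorem FixL_cons (x : Perm V) (l : List (Perm V)) : FixL (x :: l) = FixS x ⊓ FixL l := by
  ext f
  constructor
  · intro h; exact ⟨h x (by simp), fun y hy => h y (by simp [hy])⟩
  · rintro ⟨h1, h2⟩ y hy
    rcases List.mem_cons.mp hy with rfl | hy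
    · exact h1
    · exact h2 y hy

theorem FixL_dim (l : List (Perm V)) : Fintype.card V ≤ Module.finrank ℚ (FixL l) + (l.map cod).sum := by
  induction l with
  | nil =>
    have : FixL ([] : List (Perm V)) = ⊤ := by
      rw [eq_top_iff]; intro f _ y hy; simp at hy
    rw [this, finrank_top, Module.finrank_pi]; omega
  | cons x l ih =>
    rw [FixL_cons, List.map_cons, List.sum_cons]
    have := inf_dim (FixS x) (FixL l)
    have := fix_add_cod x
    omega

theorem transv (x p : Perm V) (h : FixS x ⊔ FixS p = ⊤) (f : V → ℚ) (hf : f ∈ FixS (x * p)) :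
    f ∈ FixS x ∧ f ∈ FixS p := by
  have hx : ∀ v, f (x v) - f v = 0 := by
    set g : V → ℚ := fun v => f (x v) - f v with hg
    have hgp : ∀ v, g (p v) = f v - f (p v) := by
      intro v; have := hf v; rw [Perm.mul_apply] at this; simp only [hg, this]
    have o1 : ∀ e ∈ FixS x, ∑ v, g v * e v = 0 := by
      intro e he
      have : ∀ v, g v * e v = (fun w => f w * e w) (x v) - f v * e v := by
        intro v; simp only [hg]; rw [he v]; ring
      simp only [this]
      rw [Finset.sum_sub_distrib, Equiv.sum_comp x (fun w => f w * e w), sub_self]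
    have o2 : ∀ e ∈ FixS p, ∑ v, g v * e v = 0 := by
      intro e he
      rw [← Equiv.sum_comp p]
      have : ∀ v, g (p v) * e (p v) = f v * e v - (fun w => f w * e w) (p v) := by
        intro v; simp only [hgp]; rw [he v]; ring
      simp only [this]
      rw [Finset.sum_sub_distrib, Equiv.sum_comp p (fun w => f w * e w), sub_self]
    have hgt : g ∈ FixS x ⊔ FixS p := by rw [h]; trivial
    obtain ⟨a, ha, b, hb, hab⟩ := Submodule.mem_sup.mp hgt
    have o3 : ∑ v, g v * g v = 0 := by
      have : ∀ v, g v * g v = g v * a v + g v * b v := by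
        intro v; rw [← mul_add]; congr 1; rw [← hab]; rfl
      simp only [this]
      rw [Finset.sum_add_distrib, o1 a ha, o2 b hb, add_zero]
    intro v
    have := (Finset.sum_eq_zero_iff_of_nonneg (fun v _ => mul_self_nonneg (g v))).mp o3 v (Finset.mem_univ v)
    exact mul_self_eq_zero.mp this
  refine ⟨fun v => by linarith [hx v], fun v => ?_⟩
  have := hf v
  rw [Perm.mul_apply] at this
  linarith [hx (p v)]

theorem FixL_prod (l : List (Perm V)) (h : Module.finrank ℚ (FixL l) + (l.map cod).sum ≤ Fintype.card V) :
    FixS l.prod ≤ FixL l := by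
  induction l with
  | nil => intro f _ y hy; simp at hy
  | cons x l ih =>
    rw [List.prod_cons]
    rw [FixL_cons, List.map_cons, List.sum_cons] at h
    rw [FixL_cons]
    have h1 := FixL_dim l
    have h2 := inf_dim (FixS x) (FixL l)
    have h3 := fix_add_cod x
    have h4 := ih (by omega)
    have h5 : FixL l ≤ FixS l.prod := by
      clear h h1 h2 h3 h4 ih
      intro f hf
      induction l with
      | nil => intro v; rfl
      | cons x l ih =>
        rw [FixL_cons] at hf
        rw [List.prod_cons]
        exact FixS_inf_le _ _ ⟨hf.1, ih hf.2⟩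
    have h6 : FixL l = FixS l.prod := le_antisymm h5 h4
    intro f hf
    rw [h6]
    refine transv x l.prod ?_ f hf
    rw [← h6]
    apply inf_dim_eq
    omega

/-- no odd-length obstruction: -1 is not an eigenvalue, i.e. all cycles are odd -/
def Good (y : Perm V) : Prop := ∀ f : V → ℚ, (∀ x, f (y x) = - f x) → f = 0

/-- the three-cycle a ↦ b ↦ c ↦ a -/
def tau (a b c : V) : Perm V := swap a b * swap b c

theorem tau_1 {a b c : V} (h1 : a ≠ b) (h3 : a ≠ c) : tau a b c a = b := by
  rw [tau, Perm.mul_apply, swap_apply_of_ne_of_ne h1 h3, swap_apply_left]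
theorem tau_2 {a b c : V} (h2 : b ≠ c) (h3 : a ≠ c) : tau a b c b = c := by
  rw [tau, Perm.mul_apply, swap_apply_left, swap_apply_of_ne_of_ne h3.symm h2.symm]
theorem tau_3 {a b c : V} : tau a b c c = a := by
  rw [tau, Perm.mul_apply, swap_apply_right, swap_apply_right]
theorem tau_4 {a b c x : V} (h1 : x ≠ a) (h2 : x ≠ b) (h3 : x ≠ c) : tau a b c x = x := by
  rw [tau, Perm.mul_apply, swap_apply_of_ne_of_ne h2 h3, swap_apply_of_ne_of_ne h1 h2]

theorem FixS_mul_tau (z : Perm V) {a b c : V} (h1 : a ≠ b) (h2 : b ≠ c) (h3 : a ≠ c)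
    (hb : z b = b) (hc : z c = c) (f : V → ℚ) :
    f ∈ FixS (z * tau a b c) ↔ f ∈ FixS z ∧ f b = f a ∧ f c = f a := by
  constructor
  · intro h
    have e1 := h a
    have e2 := h b
    have e3 := h c
    rw [Perm.mul_apply, tau_1 h1 h3, hb] at e1
    rw [Perm.mul_apply, tau_2 h2 h3, hc] at e2
    rw [Perm.mul_apply, tau_3] at e3
    refine ⟨fun x => ?_, e1, e2.trans e1⟩
    by_cases xa : x = a
    · subst xa; rw [e3, e2, e1]
    by_cases xb : x = b
    · subst xb; rw [hb]
    by_cases xc : x = c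
    · subst xc; rw [hc]
    have := h x
    rwa [Perm.mul_apply, tau_4 xa xb xc] at this
  · rintro ⟨h, e1, e2⟩ x
    rw [Perm.mul_apply, h]
    by_cases xa : x = a
    · subst xa; rw [tau_1 h1 h3, e1]
    by_cases xb : x = b
    · subst xb; rw [tau_2 h2 h3, e1, e2]
    by_cases xc : x = c
    · subst xc; rw [tau_3, e2]
    rw [tau_4 xa xb xc]

theorem cod_mul_tau (z : Perm V) {a b c : V} (h1 : a ≠ b) (h2 : b ≠ c) (h3 : a ≠ c)
    (hb : z b = b) (hc : z c = c) : cod (z * tau a b c) = cod z + 2 := by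
  let φ : FixS z →ₗ[ℚ] (Fin 2 → ℚ) :=
    { toFun := fun f => ![f.1 b - f.1 a, f.1 c - f.1 a]
      map_add' := by intro f g; ext i; fin_cases i <;> simp <;> ring
      map_smul' := by intro r f; ext i; fin_cases i <;> simp <;> ring }
  have hsur : Function.Surjective φ := by
    intro v
    refine ⟨⟨fun x => if x = b then v 0 else if x = c then v 1 else 0, ?_⟩, ?_⟩
    · intro x
      have e1 : z x = b ↔ x = b := by
        constructor
        · intro h; exact z.injective (h.trans hb.symm)
        · rintro rfl; exact hb
      have e2 : z x = c ↔ x = c := by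
        constructor
        · intro h; exact z.injective (h.trans hc.symm)
        · rintro rfl; exact hc
      simp only [e1, e2]
    · ext i; fin_cases i <;> simp [φ, h1, h3, h2.symm]
  have hr := φ.finrank_range_add_finrank_ker
  rw [LinearMap.range_eq_top.mpr hsur, finrank_top, Module.finrank_pi, Fintype.card_fin] at hr
  have hk : Module.finrank ℚ (LinearMap.ker φ) = Module.finrank ℚ (FixS (z * tau a b c)) := by
    have e : FixS (z * tau a b c) = (LinearMap.ker φ).map (FixS z).subtype := by
      ext f
      rw [FixS_mul_tau z h1 h2 h3 hb hc]
      constructor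
      · rintro ⟨hf, e1, e2⟩
        refine ⟨⟨f, hf⟩, ?_, rfl⟩
        change φ _ = 0
        ext i; fin_cases i <;> simp [φ, e1, e2]
      · rintro ⟨⟨g, hg⟩, hk, rfl⟩
        have hk : φ _ = 0 := hk
        have k0 := congrFun hk 0
        have k1 := congrFun hk 1
        simp [φ] at k0 k1
        exact ⟨hg, by simp; linarith, by simp; linarith⟩
    rw [e]
    exact (LinearEquiv.finrank_eq (Submodule.equivMapOfInjective _ (Submodule.subtype_injective _) _))
  have := fix_add_cod z
  have := fix_add_cod (z * tau a b c)
  omega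

theorem Good_mul_tau (z : Perm V) {a b c : V} (h1 : a ≠ b) (h2 : b ≠ c) (h3 : a ≠ c)
    (hb : z b = b) (hc : z c = c) : Good (z * tau a b c) ↔ Good z := by
  have zb : ∀ x, z x = b ↔ x = b := by
    intro x; constructor
    · intro h; exact z.injective (h.trans hb.symm)
    · rintro rfl; exact hb
  have zc : ∀ x, z x = c ↔ x = c := by
    intro x; constructor
    · intro h; exact z.injective (h.trans hc.symm)
    · rintro rfl; exact hc
  constructor
  · intro h f hf
    have fb : f b = 0 := by have := hf b; rw [hb] at this; linarith
    have fc : f c = 0 := by have := hf c; rw [hc] at this; linarith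
    have := h (fun x => if x = b then - f a else if x = c then f a else f x) ?_
    · have fa : f a = 0 := by
        have := congrFun this a
        simpa [h1, h3] using this
      ext x
      by_cases xb : x = b
      · subst xb; exact fb
      by_cases xc : x = c
      · subst xc; exact fc
      have := congrFun this x
      simpa [xb, xc] using this
    · intro x
      by_cases xa : x = a
      · subst xa; rw [Perm.mul_apply, tau_1 h1 h3, hb]; simp [h1, h3]
      by_cases xb : x = b
      · subst xb; rw [Perm.mul_apply, tau_2 h2 h3, hc]; simp [h2.symm]
      by_cases xc : x = c
      · subst xc; rw [Perm.mul_apply, tau_3]; simp [zb, zc, h1, h3, h2.symm, hf]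
      rw [Perm.mul_apply, tau_4 xa xb xc]; simp [zb, zc, xb, xc, hf]
  · intro h f hf
    have e1 := hf a
    have e2 := hf b
    have e3 := hf c
    rw [Perm.mul_apply, tau_1 h1 h3, hb] at e1
    rw [Perm.mul_apply, tau_2 h2 h3, hc] at e2
    rw [Perm.mul_apply, tau_3] at e3
    have := h (fun x => if x = b then 0 else if x = c then 0 else f x) ?_
    · have fa : f a = 0 := by
        have := congrFun this a
        simpa [h1, h3] using this
      ext x
      by_cases xb : x = b
      · subst xb; rw [e1, fa]; simp
      by_cases xc : x = c
      · subst xc; rw [e2, e1, fa]; simp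
      have := congrFun this x
      simpa [xb, xc] using this
    · intro x
      by_cases xb : x = b
      · subst xb; simp [hb]
      by_cases xc : x = c
      · subst xc; simp [hc]
      simp only [zb, zc, xb, xc, if_false]
      by_cases xa : x = a
      · subst xa; rw [e3, e2, e1]; simp
      have := hf x
      rwa [Perm.mul_apply, tau_4 xa xb xc] at this

/-- peel a three-cycle off a good permutation -/
theorem Good_step (y : Perm V) (hy : Good y) (v : V) (hv : y v ≠ v) :
    v ≠ y v ∧ y v ≠ y (y v) ∧ v ≠ y (y v) ∧ ∃ z : Perm V, z (y v) = y v ∧ z (y (y v)) = y (y v) ∧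
      y = z * tau v (y v) (y (y v)) := by
  have h2 : y v ≠ y (y v) := fun h => hv (y.injective h).symm
  have h3 : v ≠ y (y v) := by
    intro h
    have := hy (fun x => if x = v then 1 else if x = y v then -1 else 0) ?_
    · have := congrFun this v; simp at this
    · intro x
      have e1 : y x = v ↔ x = y v := by
        constructor
        · intro hx; exact y.injective (hx.trans h)
        · rintro rfl; exact h.symm
      have e2 : y x = y v ↔ x = v := y.injective.eq_iff
      simp only [e1, e2]
      by_cases xv : x = v
      · subst xv; simp [Ne.symm hv]
      by_cases xa : x = y v
      · simp [xa, hv]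
      simp [xv, xa]
  refine ⟨Ne.symm hv, h2, h3, y * (tau v (y v) (y (y v)))⁻¹, ?_, ?_, by group⟩
  · rw [Perm.mul_apply]; congr 1
    rw [Perm.inv_eq_iff_eq, tau_1 (Ne.symm hv) h3]
  · rw [Perm.mul_apply]; congr 1
    rw [Perm.inv_eq_iff_eq, tau_2 h2 h3]

theorem Good_one : Good (1 : Perm V) := by
  intro f hf; ext x; have := hf x; simp at this ⊢; linarith
end LA

section Glue
variable {V : Type} [Fintype V] [DecidableEq V] {K : Type} [Fintype K] [DecidableEq K]

/-- glue permutations of the fibres -/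
def glue (κ : V → K) (u : ∀ k, Perm {x // κ x = k}) : Perm V where
  toFun x := (u (κ x) ⟨x, rfl⟩).1
  invFun x := ((u (κ x))⁻¹ ⟨x, rfl⟩).1
  left_inv := by
    intro x
    have aux : ∀ (k) (w : {x // κ x = k}), ((u (κ w.1))⁻¹ ⟨w.1, rfl⟩).1 = ((u k)⁻¹ w).1 := by
      rintro k ⟨w, rfl⟩; rfl
    exact (aux _ (u (κ x) ⟨x, rfl⟩)).trans (by simp)
  right_inv := by
    intro x
    have aux : ∀ (k) (w : {x // κ x = k}), ((u (κ w.1)) ⟨w.1, rfl⟩).1 = ((u k) w).1 := by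
      rintro k ⟨w, rfl⟩; rfl
    exact (aux _ ((u (κ x))⁻¹ ⟨x, rfl⟩)).trans (by simp)

theorem glue_apply (κ : V → K) (u : ∀ k, Perm {x // κ x = k}) (k : K) (x : {x // κ x = k}) :
    glue κ u x.1 = (u k x).1 := by
  obtain ⟨x, rfl⟩ := x; rfl

theorem glue_kappa (κ : V → K) (u : ∀ k, Perm {x // κ x = k}) (x : V) : κ (glue κ u x) = κ x :=
  (u (κ x) ⟨x, rfl⟩).2

theorem glue_inj (κ : V → K) : Function.Injective (glue κ) := by
  intro u v h
  funext k
  ext x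
  rw [← glue_apply, ← glue_apply, h]

theorem glue_surj (κ : V → K) (z : Perm V) (hz : ∀ x, κ (z x) = κ x) : ∃ u, glue κ u = z := by
  refine ⟨fun k => z.subtypePerm (fun x => by rw [hz]), ?_⟩
  ext x; rfl

/-- extension by zero -/
def ext0 (κ : V → K) (k : K) (f : {x // κ x = k} → ℚ) : V → ℚ := fun x => if h : κ x = k then f ⟨x, h⟩ else 0

theorem ext0_apply (κ : V → K) (k : K) (f : {x // κ x = k} → ℚ) (x) : ext0 κ k f x.1 = f x := by
  simp [ext0, x.2]

theorem ext0_glue (κ : V → K) (u : ∀ k, Perm {x // κ x = k}) (k : K) (f : {x // κ x = k} → ℚ) (c : ℚ)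
    (hf : ∀ x, f (u k x) = c * f x) (x : V) : ext0 κ k f (glue κ u x) = c * ext0 κ k f x := by
  by_cases h : κ x = k
  · have := glue_apply κ u k ⟨x, h⟩
    simp only at this
    rw [this, ext0_apply, hf]
    rw [← ext0_apply κ k f ⟨x, h⟩]
  · have : κ (glue κ u x) ≠ k := by rwa [glue_kappa κ u]
    simp [ext0, h, this]

theorem Good_glue (κ : V → K) (u : ∀ k, Perm {x // κ x = k}) : Good (glue κ u) ↔ ∀ k, Good (u k) := by
  constructor
  · intro h k f hf
    have := h (ext0 κ k f) (fun x => by rw [ext0_glue κ u k f (-1) (by simpa using hf)]; ring)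
    ext x
    rw [← ext0_apply κ k f x, this]; rfl
  · intro h f hf
    ext x
    have := h (κ x) (fun w => f w.1) (fun w => by rw [← glue_apply κ u, hf])
    exact congrFun this ⟨x, rfl⟩

theorem mem_FixS_glue (κ : V → K) (u : ∀ k, Perm {x // κ x = k}) (f : V → ℚ) :
    f ∈ FixS (glue κ u) ↔ ∀ k, (fun x : {x // κ x = k} => f x.1) ∈ FixS (u k) := by
  constructor
  · intro h k x
    change f (u k x).1 = f x.1
    rw [← glue_apply κ u, h]
  · intro h x
    have := h (κ x) ⟨x, rfl⟩
    exact this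

theorem ext0_mem (κ : V → K) (u : ∀ k, Perm {x // κ x = k}) (k : K) (f : {x // κ x = k} → ℚ)
   (hf : f ∈ FixS (u k)) : ext0 κ k f ∈ FixS (glue κ u) := by
  intro x
  rw [ext0_glue κ u k f 1 (fun w => by rw [hf w, one_mul])]; ring

/-- fixed space of a glued permutation -/
def fixGlue (κ : V → K) (u : ∀ k, Perm {x // κ x = k}) : FixS (glue κ u) ≃ₗ[ℚ] (∀ k, FixS (u k)) where
  toFun f k := ⟨fun x => f.1 x.1, (mem_FixS_glue κ u f.1).mp f.2 k⟩
  map_add' f g := rfl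
  map_smul' c f := rfl
  invFun g := ⟨fun x => (g (κ x)).1 ⟨x, rfl⟩, by
    rw [mem_FixS_glue]
    intro k
    have : (fun x : {x // κ x = k} => (g (κ x.1)).1 ⟨x.1, rfl⟩) = (g k).1 := by
      ext ⟨x, rfl⟩; rfl
    rw [this]; exact (g k).2⟩
  left_inv f := rfl
  right_inv g := by
    funext k
    ext ⟨x, rfl⟩
    rfl

theorem card_fib (κ : V → K) : Fintype.card V = ∑ k, Fintype.card {x // κ x = k} := by
  rw [← Fintype.card_sigma]
  exact (Fintype.card_congr (Equiv.sigmaFiberEquiv κ)).symm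

theorem cod_glue (κ : V → K) (u : ∀ k, Perm {x // κ x = k}) : cod (glue κ u) = ∑ k, cod (u k) := by
  have h1 := (fixGlue κ u).finrank_eq
  rw [Module.finrank_pi_fintype] at h1
  have h2 := fix_add_cod (glue κ u)
  have h3 : ∑ k, (Module.finrank ℚ (FixS (u k)) + cod (u k)) = ∑ k, Fintype.card {x // κ x = k} :=
    Finset.sum_congr rfl (fun k _ => fix_add_cod (u k))
  rw [Finset.sum_add_distrib, ← card_fib] at h3
  omega
end Glue

section Cact
variable {V : Type} [Fintype V] [DecidableEq V] {q : ℕ}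

/-- cacti -/
def Cact (y : Fin q → Perm V) : Prop :=
  (∀ i, Good (y i)) ∧ (∀ f : V → ℚ, (∀ i, f ∈ FixS (y i)) → ∀ x x', f x = f x') ∧
    ∑ i, cod (y i) + 1 = Fintype.card V

/-- weight -/
noncomputable def wt (y : Fin q → Perm V) : MvPolynomial (Fin q) ℚ := ∏ i, MvPolynomial.X i ^ (cod (y i) / 2)

open Classical in
/-- rooted weighted count -/
noncomputable def bsum (J : Finset (Fin q)) (V : Type) [Fintype V] [DecidableEq V] : MvPolynomial (Fin q) ℚ :=
  ∑ p ∈ Finset.univ.filter (fun p : (Fin q → Perm V) × V => Cact p.1 ∧ ∀ i ∈ J, p.1 i p.2 = p.2), wt p.1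

theorem mem_FixL_ofFn (y : Fin q → Perm V) (f : V → ℚ) : f ∈ FixL (List.ofFn y) ↔ ∀ i, f ∈ FixS (y i) := by
  constructor
  · intro h i; exact h (y i) (by simp)
  · intro h z hz
    obtain ⟨i, rfl⟩ := List.mem_ofFn.mp hz
    exact h i

theorem FixL_dim_ofFn (y : Fin q → Perm V) :
    Fintype.card V ≤ Module.finrank ℚ (FixL (List.ofFn y)) + ∑ i, cod (y i) := by
  have := FixL_dim (List.ofFn y)
  rwa [List.map_ofFn, List.sum_ofFn] at this

theorem conn_dim (y : Fin q → Perm V)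
    (h : ∀ f : V → ℚ, (∀ i, f ∈ FixS (y i)) → ∀ x x', f x = f x') (x₀ : V) :
    Module.finrank ℚ (FixL (List.ofFn y)) ≤ 1 := by
  apply finrank_le_one (⟨fun _ => 1, by rw [mem_FixL_ofFn]; intro i x; rfl⟩ : FixL (List.ofFn y))
  rintro ⟨f, hf⟩
  refine ⟨f x₀, ?_⟩
  ext x
  simp [h f ((mem_FixL_ofFn y f).mp hf) x x₀]

/-- three-block forests -/
def Block (κ : V → Fin 3) (Jk : Fin 3 → Finset (Fin q)) (z : Fin q → Perm V) (p : Fin 3 → V) : Prop :=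
  (∀ i x, κ (z i x) = κ x) ∧ (∀ k, κ (p k) = k) ∧ (∀ i, Good (z i)) ∧
  (∀ f : V → ℚ, (∀ i, f ∈ FixS (z i)) → ∀ x x', κ x = κ x' → f x = f x') ∧
  ∑ i, cod (z i) + 3 = Fintype.card V ∧ ∀ k, ∀ i ∈ Jk k, z i (p k) = p k

theorem block_iff (κ : V → Fin 3) (Jk : Fin 3 → Finset (Fin q))
    (u : ∀ k, (Fin q → Perm {x // κ x = k}) × {x // κ x = k}) :
    Block κ Jk (fun i => glue κ (fun k => (u k).1 i)) (fun k => (u k).2.1) ↔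
      ∀ k, Cact (u k).1 ∧ ∀ i ∈ Jk k, (u k).1 i (u k).2 = (u k).2 := by
  have hcod : ∑ i, cod (glue κ (fun k => (u k).1 i)) = ∑ k, ∑ i, cod ((u k).1 i) := by
    rw [Finset.sum_comm]
    exact Finset.sum_congr rfl (fun i _ => cod_glue κ _)
  have h3 : ∑ k : Fin 3, (∑ i, cod ((u k).1 i) + 1) = ∑ i, cod (glue κ (fun k => (u k).1 i)) + 3 := by
    rw [hcod, Finset.sum_add_distrib]; simp
  constructor
  · rintro ⟨h1, h2, h3', h4, h5, h6⟩
    have hcon : ∀ k, ∀ f : {x // κ x = k} → ℚ, (∀ i, f ∈ FixS ((u k).1 i)) → ∀ x x', f x = f x' := by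
      intro k f hf x x'
      have := h4 (ext0 κ k f) (fun i => ext0_mem κ (fun k => (u k).1 i) k f (hf i)) x x' (x.2.trans x'.2.symm)
      rwa [ext0_apply, ext0_apply] at this
    have hle : ∀ k ∈ (Finset.univ : Finset (Fin 3)), Fintype.card {x // κ x = k} ≤ ∑ i, cod ((u k).1 i) + 1 := by
      intro k _
      have e1 := FixL_dim_ofFn (u k).1
      have e2 := conn_dim (u k).1 (hcon k) (u k).2
      omega
    have heq := (Finset.sum_eq_sum_iff_of_le hle).mp (by rw [← card_fib, h3, h5])
    intro k
    refine ⟨⟨fun i => (Good_glue κ _).mp (h3' i) k, hcon k, (heq k (Finset.mem_univ k)).symm⟩, ?_⟩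
    intro i hi
    have := h6 k i hi
    rw [glue_apply] at this
    exact Subtype.ext this
  · intro h
    refine ⟨fun i x => glue_kappa _ _ _, fun k => (u k).2.2, fun i => (Good_glue κ _).mpr (fun k => (h k).1.1 i), ?_, ?_, ?_⟩
    · intro f hf x x' hx
      exact (h (κ x)).1.2.1 (fun w => f w.1) (fun i => (mem_FixS_glue κ _ f).mp (hf i) (κ x)) ⟨x, rfl⟩ ⟨x', hx.symm⟩
    · rw [← h3, card_fib κ]
      exact Finset.sum_congr rfl (fun k _ => (h k).1.2.2)
    · intro k i hi
      rw [glue_apply, (h k).2 i hi]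

open Classical in
theorem stage2 (κ : V → Fin 3) (Jk : Fin 3 → Finset (Fin q)) 
    (hev : ∀ (W : Type) [Fintype W] [DecidableEq W] (y : Perm W), Good y → 2 ∣ cod y) :
    ∑ zp ∈ Finset.univ.filter (fun zp : (Fin q → Perm V) × (Fin 3 → V) => Block κ Jk zp.1 zp.2), wt zp.1 =
      ∏ k, bsum (Jk k) {x // κ x = k} := by
  unfold bsum
  rw [Finset.prod_univ_sum]
  symm
  refine Finset.sum_bij (fun u _ => (fun i => glue κ (fun k => (u k).1 i), fun k => (u k).2.1)) ?_ ?_ ?_ ?_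
  · intro u hu
    rw [Fintype.mem_piFinset] at hu
    simp only [Finset.mem_filter, Finset.mem_univ, true_and] at hu ⊢
    exact (block_iff κ Jk u).mpr hu
  · intro u _ u' _ h
    rw [Prod.mk.injEq] at h
    funext k
    refine Prod.ext ?_ ?_
    · funext i
      exact congrFun (glue_inj κ (congrFun h.1 i)) k
    · exact Subtype.ext (congrFun h.2 k)
  · rintro ⟨z, p⟩ h
    simp only [Finset.mem_filter, Finset.mem_univ, true_and] at h
    choose u hu using fun i => glue_surj κ (z i) (h.1 i)
    refine ⟨fun k => (fun i => u i k, ⟨p k, h.2.1 k⟩), ?_, ?_⟩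
    · rw [Fintype.mem_piFinset]
      simp only [Finset.mem_filter, Finset.mem_univ, true_and]
      refine (block_iff κ Jk (fun k => (fun i => u i k, ⟨p k, h.2.1 k⟩))).mp ?_
      convert h using 2
      exact hu _
    · simp [hu]
  · intro u hu
    rw [Fintype.mem_piFinset] at hu
    simp only [Finset.mem_filter, Finset.mem_univ, true_and] at hu
    unfold wt
    rw [Finset.prod_comm]
    apply Finset.prod_congr rfl
    intro i _
    rw [Finset.prod_pow_eq_pow_sum, cod_glue]
    congr 1
    symm
    apply Nat.sum_div
    intro k _
    exact hev _ _ ((hu k).1.1 i)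

theorem Good_even (V : Type) [Fintype V] [DecidableEq V] (y : Perm V) (hy : Good y) : 2 ∣ cod y := by
  induction h : cod y using Nat.strong_induction_on generalizing y with
  | _ n ih =>
    by_cases hv : ∃ v, y v ≠ v
    · obtain ⟨v, hv⟩ := hv
      obtain ⟨h1, h2, h3, z, hz1, hz2, hyz⟩ := Good_step y hy v hv
      have hc := cod_mul_tau z h1 h2 h3 hz1 hz2
      have hg := Good_mul_tau z h1 h2 h3 hz1 hz2
      rw [← hyz] at hc hg
      have := ih (cod z) (by omega) z (hg.mp hy) rfl
      omega
    · push Not at hv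
      have : y = 1 := Perm.ext hv
      rw [this, cod_one] at h
      simp [← h]

/-- the gluing map in stage 1 -/
def addTau (j : Fin q) (z : Fin q → Perm V) (p : Fin 3 → V) : Fin q → Perm V :=
  Function.update z j (z j * tau (p 0) (p 1) (p 2))

theorem addTau_facts (κ : V → Fin 3) (J : Finset (Fin q)) (j : Fin q) (z : Fin q → Perm V) (p : Fin 3 → V)
    (h : Block κ ![J, {j}, {j}] z p) :
    p 0 ≠ p 1 ∧ p 1 ≠ p 2 ∧ p 0 ≠ p 2 ∧ z j (p 1) = p 1 ∧ z j (p 2) = p 2 := by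
  obtain ⟨h1, h2, h3, h4, h5, h6⟩ := h
  have hne : ∀ k l, k ≠ l → p k ≠ p l := fun k l hkl e => hkl (by rw [← h2 k, e, h2 l])
  exact ⟨hne _ _ (by decide), hne _ _ (by decide), hne _ _ (by decide), h6 1 j (by simp), h6 2 j (by simp)⟩

theorem addTau_fix (_J : Finset (Fin q)) (j : Fin q) (z : Fin q → Perm V) (p : Fin 3 → V)
    (hp : p 0 ≠ p 1 ∧ p 1 ≠ p 2 ∧ p 0 ≠ p 2 ∧ z j (p 1) = p 1 ∧ z j (p 2) = p 2) (f : V → ℚ) :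
    (∀ i, f ∈ FixS (addTau j z p i)) ↔ (∀ i, f ∈ FixS (z i)) ∧ f (p 1) = f (p 0) ∧ f (p 2) = f (p 0) := by
  obtain ⟨a1, a2, a3, a4, a5⟩ := hp
  have hj : f ∈ FixS (addTau j z p j) ↔ f ∈ FixS (z j) ∧ f (p 1) = f (p 0) ∧ f (p 2) = f (p 0) := by
    rw [addTau, Function.update_self]; exact FixS_mul_tau (z j) a1 a2 a3 a4 a5 f
  constructor
  · intro h
    refine ⟨fun i => ?_, (hj.mp (h j)).2⟩
    by_cases hi : i = j
    · subst hi; exact (hj.mp (h _)).1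
    · have := h i; rwa [addTau, Function.update_of_ne hi] at this
  · rintro ⟨h, h'⟩ i
    by_cases hi : i = j
    · subst hi; exact hj.mpr ⟨h _, h'⟩
    · rw [addTau, Function.update_of_ne hi]; exact h i

theorem addTau_cod (j : Fin q) (z : Fin q → Perm V) (p : Fin 3 → V)
    (hp : p 0 ≠ p 1 ∧ p 1 ≠ p 2 ∧ p 0 ≠ p 2 ∧ z j (p 1) = p 1 ∧ z j (p 2) = p 2) :
    ∑ i, cod (addTau j z p i) = ∑ i, cod (z i) + 2 := by
  obtain ⟨a1, a2, a3, a4, a5⟩ := hp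
  rw [← Finset.add_sum_erase _ _ (Finset.mem_univ j), ← Finset.add_sum_erase (a := j) (f := fun i => cod (z i)) _ (Finset.mem_univ j)]
  have : ∑ i ∈ Finset.univ.erase j, cod (addTau j z p i) = ∑ i ∈ Finset.univ.erase j, cod (z i) := by
    apply Finset.sum_congr rfl
    intro i hi
    rw [addTau, Function.update_of_ne (Finset.ne_of_mem_erase hi)]
  rw [this]
  have : cod (addTau j z p j) = cod (z j) + 2 := by
    rw [addTau, Function.update_self, cod_mul_tau (z j) a1 a2 a3 a4 a5]
  omega

theorem addTau_wt (j : Fin q) (z : Fin q → Perm V) (p : Fin 3 → V)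
    (hp : p 0 ≠ p 1 ∧ p 1 ≠ p 2 ∧ p 0 ≠ p 2 ∧ z j (p 1) = p 1 ∧ z j (p 2) = p 2) :
    wt (addTau j z p) = MvPolynomial.X j * wt z := by
  obtain ⟨a1, a2, a3, a4, a5⟩ := hp
  unfold wt
  rw [← Finset.mul_prod_erase _ _ (Finset.mem_univ j), ← Finset.mul_prod_erase (a := j) (f := fun i => MvPolynomial.X i ^ (cod (z i) / 2)) _ (Finset.mem_univ j)]
  have : ∏ i ∈ Finset.univ.erase j, (MvPolynomial.X i : MvPolynomial (Fin q) ℚ) ^ (cod (addTau j z p i) / 2) = ∏ i ∈ Finset.univ.erase j, MvPolynomial.X i ^ (cod (z i) / 2) := by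
    apply Finset.prod_congr rfl
    intro i hi
    rw [addTau, Function.update_of_ne (Finset.ne_of_mem_erase hi)]
  rw [this]
  have : cod (addTau j z p j) = cod (z j) + 2 := by
    rw [addTau, Function.update_self, cod_mul_tau (z j) a1 a2 a3 a4 a5]
  rw [this, Nat.add_div_right _ (by norm_num), pow_succ]; ring

theorem addTau_good (j : Fin q) (z : Fin q → Perm V) (p : Fin 3 → V)
    (hp : p 0 ≠ p 1 ∧ p 1 ≠ p 2 ∧ p 0 ≠ p 2 ∧ z j (p 1) = p 1 ∧ z j (p 2) = p 2) :
    (∀ i, Good (addTau j z p i)) ↔ ∀ i, Good (z i) := by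
  obtain ⟨a1, a2, a3, a4, a5⟩ := hp
  have hj : Good (addTau j z p j) ↔ Good (z j) := by
    rw [addTau, Function.update_self, Good_mul_tau (z j) a1 a2 a3 a4 a5]
  constructor <;> intro h i <;> by_cases hi : i = j
  · subst hi; exact hj.mp (h _)
  · have := h i; rwa [addTau, Function.update_of_ne hi] at this
  · subst hi; exact hj.mpr (h _)
  · rw [addTau, Function.update_of_ne hi]; exact h i

theorem addTau_tree (κ : V → Fin 3) (J : Finset (Fin q)) (j : Fin q) (hj : j ∉ J) (z : Fin q → Perm V) (p : Fin 3 → V)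
    (h : Block κ ![J, {j}, {j}] z p) :
    Cact (addTau j z p) ∧ (∀ i ∈ J, addTau j z p i (p 0) = p 0) ∧ addTau j z p j (p 0) ≠ p 0 ∧
     addTau j z p j (p 0) = p 1 ∧ addTau j z p j (p 1) = p 2 := by
  have hp := addTau_facts κ J j z p h
  obtain ⟨a1, a2, a3, a4, a5⟩ := id hp
  obtain ⟨h1, h2, h3, h4, h5, h6⟩ := h
  have e1 : addTau j z p j (p 0) = p 1 := by
    rw [addTau, Function.update_self, Perm.mul_apply, tau_1 a1 a3, a4]
  have e2 : addTau j z p j (p 1) = p 2 := by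
    rw [addTau, Function.update_self, Perm.mul_apply, tau_2 a2 a3, a5]
  refine ⟨⟨(addTau_good j z p hp).mpr h3, ?_, ?_⟩, ?_, ?_, e1, e2⟩
  · intro f hf
    obtain ⟨b1, b2, b3⟩ := (addTau_fix J j z p hp f).mp hf
    have : ∀ x, f x = f (p 0) := by
      intro x
      rw [h4 f b1 x (p (κ x)) (h2 _).symm]
      generalize κ x = k
      fin_cases k
      · rfl
      · exact b2
      · exact b3
    intro x x'; rw [this x, this x']
  · rw [addTau_cod j z p hp, ← h5]
  · intro i hi
    have : i ≠ j := by rintro rfl; exact hj hi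
    rw [addTau, Function.update_of_ne this]
    exact h6 0 i (by simpa using hi)
  · rw [e1]; exact a1.symm

theorem addTau_inj (J : Finset (Fin q)) (j : Fin q) (hj : j ∉ J) (κ κ' : V → Fin 3) (z z' : Fin q → Perm V) (p p' : Fin 3 → V)
    (h : Block κ ![J, {j}, {j}] z p) (h' : Block κ' ![J, {j}, {j}] z' p')
    (e : addTau j z p = addTau j z' p') (e0 : p 0 = p' 0) : κ = κ' ∧ z = z' ∧ p = p' := by
  obtain ⟨-, -, -, c1, c2⟩ := addTau_tree κ J j hj z p h
  obtain ⟨-, -, -, c1', c2'⟩ := addTau_tree κ' J j hj z' p' h'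
  have e1 : p 1 = p' 1 := by rw [← c1, ← c1', e, e0]
  have e2 : p 2 = p' 2 := by rw [← c2, ← c2', e, e1]
  have hp : p = p' := by
    funext k; fin_cases k
    · exact e0
    · exact e1
    · exact e2
  subst hp
  have hz : z = z' := by
    funext i
    have := congrFun e i
    by_cases hi : i = j
    · subst hi
      rw [addTau, addTau, Function.update_self, Function.update_self] at this
      exact mul_right_cancel this
    · rwa [addTau, addTau, Function.update_of_ne hi, Function.update_of_ne hi] at this
  subst hz
  refine ⟨?_, rfl, rfl⟩
  funext x
  have := h'.2.2.2.1 (fun w => if κ w = κ x then 1 else 0) (fun i w => by simp only [h.1]) x (p (κ' x)) (h'.2.1 _).symm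
  simp only [if_true, h.2.1] at this
  by_contra hne
  rw [if_neg (fun e => hne e.symm)] at this
  norm_num at this

theorem addTau_surj (J : Finset (Fin q)) (j : Fin q) (hj : j ∉ J) (y : Fin q → Perm V) (v : V)
    (h : Cact y) (hJ : ∀ i ∈ J, y i v = v) (hv : y j v ≠ v) :
    ∃ κ z p, Block κ ![J, {j}, {j}] z p ∧ addTau j z p = y ∧ p 0 = v := by
  obtain ⟨h1, h2, h3, w, hw1, hw2, hyw⟩ := Good_step (y j) (h.1 j) v hv
  set p : Fin 3 → V := ![v, y j v, y j (y j v)] with hpd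
  set z : Fin q → Perm V := Function.update y j w with hzd
  have hzj : z j = w := by rw [hzd, Function.update_self]
  have hp : p 0 ≠ p 1 ∧ p 1 ≠ p 2 ∧ p 0 ≠ p 2 ∧ z j (p 1) = p 1 ∧ z j (p 2) = p 2 := by
    rw [hzj]; exact ⟨h1, h2, h3, hw1, hw2⟩
  have hy : addTau j z p = y := by
    funext i
    by_cases hi : i = j
    · subst hi; rw [addTau, Function.update_self, hzj]; exact hyw.symm
    · rw [addTau, Function.update_of_ne hi, hzd, Function.update_of_ne hi]
  have hcod := addTau_cod j z p hp
  rw [hy] at hcod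
  have hgood := addTau_good j z p hp
  rw [hy] at hgood
  have hfix := addTau_fix J j z p hp
  rw [hy] at hfix
  let U := FixL (List.ofFn z)
  let φ : U →ₗ[ℚ] (Fin 3 → ℚ) :=
    { toFun := fun f k => f.1 (p k)
      map_add' := by intro f g; rfl
      map_smul' := by intro r f; rfl }
  have hinj : Function.Injective φ := by
    rw [injective_iff_map_eq_zero]
    rintro ⟨f, hf⟩ h0
    have k0 : f (p 0) = 0 := congrFun h0 0
    have k1 : f (p 1) = 0 := congrFun h0 1
    have k2 : f (p 2) = 0 := congrFun h0 2
    have := h.2.1 f ((hfix f).mpr ⟨(mem_FixL_ofFn z f).mp hf, by rw [k1, k0], by rw [k2, k0]⟩)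
    ext x
    change f x = 0
    rw [this x (p 0), k0]
  have hdim : Module.finrank ℚ U = Module.finrank ℚ (Fin 3 → ℚ) := by
    have d1 := LinearMap.finrank_le_finrank_of_injective hinj
    have d2 := FixL_dim_ofFn z
    have d3 := h.2.2
    rw [Module.finrank_pi, Fintype.card_fin] at d1 ⊢
    change Fintype.card V ≤ Module.finrank ℚ U + _ at d2
    omega
  have hsur : Function.Surjective φ := (LinearMap.injective_iff_surjective_of_finrank_eq_finrank hdim).mp hinj
  have uniq : ∀ f g : V → ℚ, (∀ i, f ∈ FixS (z i)) → (∀ i, g ∈ FixS (z i)) → (∀ k, f (p k) = g (p k)) → f = g := by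
    intro f g hf hg hk
    have := @hinj ⟨f, (mem_FixL_ofFn z f).mpr hf⟩ ⟨g, (mem_FixL_ofFn z g).mpr hg⟩ (funext hk)
    exact congrArg Subtype.val this
  have hex : ∀ k : Fin 3, ∃ e : V → ℚ, (∀ i, e ∈ FixS (z i)) ∧ ∀ l, e (p l) = if l = k then 1 else 0 := by
    intro k
    obtain ⟨⟨e, he⟩, hk⟩ := hsur (fun l => if l = k then 1 else 0)
    exact ⟨e, (mem_FixL_ofFn z e).mp he, fun l => congrFun hk l⟩
  choose e he1 he2 using hex
  have idem : ∀ k x, e k x * e k x = e k x := by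
    intro k x
    have := uniq (fun x => e k x * e k x) (e k) (fun i x => by simp only; rw [he1 k i x]) (he1 k)
      (by intro l; simp only [he2]; split_ifs <;> simp)
    exact congrFun this x
  have hsum : ∀ f : V → ℚ, (∀ i, f ∈ FixS (z i)) → ∀ x, f x = ∑ k, f (p k) * e k x := by
    intro f hf x
    have := uniq f (fun x => ∑ k, f (p k) * e k x) hf (fun i x => by
        simp only; exact Finset.sum_congr rfl (fun k _ => by rw [he1 k i x]))
      (by intro l; simp [he2])
    exact congrFun this x
  have hone : ∀ x, ∑ k, e k x = 1 := by
    intro x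
    have := hsum (fun _ => 1) (fun i x => rfl) x
    simpa using this.symm
  have hval : ∀ k x, e k x = 0 ∨ e k x = 1 := by
    intro k x
    have : e k x * (e k x - 1) = 0 := by linarith [idem k x]
    rcases mul_eq_zero.mp this with h | h
    · left; exact h
    · right; linarith
  have hκ : ∀ x, ∃ k, ∀ l, e l x = if l = k then 1 else 0 := by
    intro x
    have hs := hone x
    rw [Fin.sum_univ_three] at hs
    rcases hval 0 x with h0 | h0 <;> rcases hval 1 x with h1 | h1 <;> rcases hval 2 x with h2 | h2 <;>
      rw [h0, h1, h2] at hs <;> norm_num at hs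
    · exact ⟨2, fun l => by fin_cases l <;> simp [h0, h1, h2]⟩
    · exact ⟨1, fun l => by fin_cases l <;> simp [h0, h1, h2]⟩
    · exact ⟨0, fun l => by fin_cases l <;> simp [h0, h1, h2]⟩
  choose κ hκ using hκ
  have hκu : ∀ x k, e k x = 1 → κ x = k := by
    intro x k hk
    rw [hκ] at hk
    by_contra hne
    rw [if_neg (fun e => hne e.symm)] at hk
    norm_num at hk
  refine ⟨κ, z, p, ⟨?_, ?_, hgood.mp h.1, ?_, ?_, ?_⟩, hy, rfl⟩
  · intro i x
    apply hκu
    rw [he1 _ i x, hκ]; simp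
  · intro k
    apply hκu; rw [he2]; simp
  · intro f hf x x' hxx
    rw [hsum f hf x, hsum f hf x']
    simp only [hκ, hxx]
  · have := h.2.2; omega
  · intro k i hi
    fin_cases k
    · have hi : i ∈ J := hi
      have : i ≠ j := by rintro rfl; exact hj hi
      change z i v = v
      rw [hzd, Function.update_of_ne this]; exact hJ i hi
    · have hi : i = j := by simpa using hi
      subst hi; exact hp.2.2.2.1
    · have hi : i = j := by simpa using hi
      subst hi; exact hp.2.2.2.2

open Classical in
theorem stage1 (J : Finset (Fin q)) (j : Fin q) (hj : j ∉ J) :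
    ∑ p ∈ Finset.univ.filter (fun p : (Fin q → Perm V) × V => (Cact p.1 ∧ ∀ i ∈ J, p.1 i p.2 = p.2) ∧ p.1 j p.2 ≠ p.2), wt p.1 =
     MvPolynomial.X j * ∑ κ : V → Fin 3, ∑ zp ∈ Finset.univ.filter (fun zp : (Fin q → Perm V) × (Fin 3 → V) => Block κ ![J, {j}, {j}] zp.1 zp.2), wt zp.1 := by
  rw [Finset.sum_sigma', Finset.mul_sum]
  symm
  refine Finset.sum_bij (fun s _ => (addTau j s.2.1 s.2.2, s.2.2 0)) ?_ ?_ ?_ ?_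
  · rintro ⟨κ, z, p⟩ h
    simp only [Finset.mem_sigma, Finset.mem_filter, Finset.mem_univ, true_and] at h ⊢
    obtain ⟨a, b, c, -⟩ := addTau_tree κ J j hj z p h
    exact ⟨⟨a, b⟩, c⟩
  · rintro ⟨κ, z, p⟩ h ⟨κ', z', p'⟩ h' e
    simp only [Finset.mem_sigma, Finset.mem_filter, Finset.mem_univ, true_and] at h h' e
    rw [Prod.mk.injEq] at e
    obtain ⟨rfl, rfl, rfl⟩ := addTau_inj J j hj κ κ' z z' p p' h h' e.1 e.2
    rfl
  · rintro ⟨y, v⟩ h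
    simp only [Finset.mem_filter, Finset.mem_univ, true_and] at h
    obtain ⟨κ, z, p, hb, h1, h2⟩ := addTau_surj J j hj y v h.1.1 h.1.2 h.2
    exact ⟨⟨κ, z, p⟩, by simpa using hb, by simp [h1, h2]⟩
  · rintro ⟨κ, z, p⟩ h
    simp only [Finset.mem_sigma, Finset.mem_filter, Finset.mem_univ, true_and] at h
    exact (addTau_wt j z p (addTau_facts κ J j z p h)).symm

theorem bsum_rec (J : Finset (Fin q)) (j : Fin q) (hj : j ∉ J) :
    bsum J V = bsum (insert j J) V + MvPolynomial.X j * ∑ κ : V → Fin 3, ∏ k, bsum ((![J, {j}, {j}] : Fin 3 → Finset (Fin q)) k) {x // κ x = k} := by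
  classical
  have h1 := stage1 (V := V) J j hj
  simp only [fun κ : V → Fin 3 => stage2 κ ![J, {j}, {j}] (fun W _ _ y hy => Good_even W y hy)] at h1
  rw [← h1]
  unfold bsum
  rw [← Finset.sum_filter_add_sum_filter_not _ (fun p : (Fin q → Perm V) × V => p.1 j p.2 = p.2), Finset.filter_filter, Finset.filter_filter]
  congr 1
  apply Finset.sum_congr _ (fun _ _ => rfl)
  ext p
  simp only [Finset.mem_filter, Finset.mem_univ, true_and, Finset.mem_insert, forall_eq_or_imp]
  tauto
end Cact

section Transport
variable {V W : Type} [Fintype V] [DecidableEq V] [Fintype W] [DecidableEq W] {q : ℕ}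

theorem FixS_congr (e : V ≃ W) (y : Perm V) (f : W → ℚ) : f ∈ FixS (e.permCongr y) ↔ f ∘ e ∈ FixS y := by
  constructor
  · intro h x
    have := h (e x)
    simpa using this
  · intro h x
    have := h (e.symm x)
    simpa using this

theorem Good_congr (e : V ≃ W) (y : Perm V) : Good (e.permCongr y) ↔ Good y := by
  constructor
  · intro h f hf
    have := h (f ∘ e.symm) (fun x => by simp [hf])
    ext x
    have := congrFun this (e x)
    simpa using this
  · intro h f hf
    have := h (f ∘ e) (fun x => by have := hf (e x); simpa using this)
    ext x
    have := congrFun this (e.symm x)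
    simpa using this

theorem cod_congr (e : V ≃ W) (y : Perm V) : cod (e.permCongr y) = cod y := by
  have h : Submodule.map (LinearEquiv.funCongrLeft ℚ ℚ e).toLinearMap (FixS (e.permCongr y)) = FixS y := by
    ext f
    constructor
    · rintro ⟨g, hg, rfl⟩
      exact (FixS_congr e y g).mp hg
    · intro hf
      refine ⟨f ∘ e.symm, (FixS_congr e y _).mpr ?_, ?_⟩
      · convert hf using 1; ext x; simp
      · ext x; simp [LinearEquiv.funCongrLeft_apply, LinearMap.funLeft_apply]
  have h2 : Module.finrank ℚ (FixS (e.permCongr y)) = Module.finrank ℚ (FixS y) := by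
    rw [← h]; exact (LinearEquiv.finrank_map_eq _ _).symm
  unfold cod
  rw [h2, Fintype.card_congr e]

theorem Cact_congr' (e : V ≃ W) (y : Fin q → Perm V) (h : Cact y) : Cact (fun i => e.permCongr (y i)) := by
  refine ⟨fun i => (Good_congr e _).mpr (h.1 i), ?_, ?_⟩
  · intro f hf x x'
    have := h.2.1 (f ∘ e) (fun i => (FixS_congr e _ f).mp (hf i)) (e.symm x) (e.symm x')
    simpa using this
  · simp only [cod_congr]; rw [h.2.2, Fintype.card_congr e]

theorem Cact_congr (e : V ≃ W) (y : Fin q → Perm V) : Cact (fun i => e.permCongr (y i)) ↔ Cact y := by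
  refine ⟨fun h => ?_, Cact_congr' e y⟩
  have := Cact_congr' e.symm _ h
  convert this using 2
  ext x; simp

theorem wt_congr (e : V ≃ W) (y : Fin q → Perm V) : wt (fun i => e.permCongr (y i)) = wt y := by
  unfold wt; simp only [cod_congr]

theorem bsum_congr (e : V ≃ W) (J : Finset (Fin q)) : bsum J V = bsum J W := by
  classical
  unfold bsum
  refine Finset.sum_equiv (Equiv.prodCongr (Equiv.piCongrRight (fun _ => e.permCongr)) e) ?_ ?_
  · rintro ⟨y, v⟩
    simp only [Finset.mem_filter, Finset.mem_univ, true_and]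
    have := Cact_congr e y
    refine and_congr this.symm ?_
    apply forall_congr'; intro i
    apply imp_congr_right; intro _
    simp
  · rintro ⟨y, v⟩ _
    exact (wt_congr e y).symm

theorem bsum_zero (J : Finset (Fin q)) : bsum J (Fin 0) = 0 := by
  unfold bsum
  apply Finset.sum_eq_zero
  rintro ⟨y, v⟩; exact v.elim0

theorem Perm_sub [Subsingleton V] (y : Perm V) : y = 1 := by
  ext x; exact Subsingleton.elim _ _

theorem bsum_one (J : Finset (Fin q)) : bsum J (Fin 1) = 1 := by
  classical
  unfold bsum
  have : (Finset.univ.filter (fun p : (Fin q → Perm (Fin 1)) × Fin 1 => Cact p.1 ∧ ∀ i ∈ J, p.1 i p.2 = p.2)) = {(1, 0)} := by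
    ext ⟨y, v⟩
    simp only [Finset.mem_filter, Finset.mem_univ, true_and, Finset.mem_singleton]
    have hy : y = 1 := by funext i; exact Perm_sub _
    have hv : v = 0 := Subsingleton.elim _ _
    subst hy hv
    refine ⟨fun _ => rfl, fun _ => ⟨⟨fun i => Good_one, fun f _ x x' => by rw [Subsingleton.elim x x'], ?_⟩, fun i _ => rfl⟩⟩
    simp [cod_one]
  rw [this, Finset.sum_singleton]
  simp [wt, cod_one]

theorem bsum_univ (n : ℕ) (hn : n ≠ 1) : bsum (Finset.univ : Finset (Fin q)) (Fin n) = 0 := by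
  classical
  unfold bsum
  apply Finset.sum_eq_zero
  rintro ⟨y, v⟩ h
  exfalso
  simp only [Finset.mem_filter, Finset.mem_univ, true_and, true_imp_iff] at h
  obtain ⟨h, hv⟩ := h
  have h2 := h.2.1 (fun x => if x = v then 1 else 0) (fun i x => by
    have : y i x = v ↔ x = v := by
      constructor
      · intro e; exact (y i).injective (e.trans (hv i).symm)
      · rintro rfl; exact hv i
    simp only [this])
  apply hn
  have h3 : ∀ x, x = v := by
    intro x
    have := h2 x v
    simp at this
    exact this
  have : Fintype.card (Fin n) = 1 := Fintype.card_eq_one_iff.mpr ⟨v, h3⟩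
  simpa using this
end Transport

open PowerSeries in
theorem bsum_main (q n : ℕ) (r : Fin q → ℕ) (hr : 2 * ∑ i, r i = n) :
    ((n+1 : ℕ) : ℚ) * MvPolynomial.coeff (Finsupp.equivFunOnFinite.symm r) (bsum (∅ : Finset (Fin q)) (Fin (n+1))) =
      (n+1).factorial * ∏ i, (luc (n+1) (r i) : ℚ) := by
  have key := algMain (fun J : Finset (Fin q) => egf (fun n => bsum J (Fin n))) ?_ ?_ ?_ n r hr
  · rw [← key]
    simp only [egf, coeff_mk]
    rw [MvPolynomial.algebraMap_eq, MvPolynomial.coeff_C_mul]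
    have : ((n+1).factorial : ℚ) ≠ 0 := by exact_mod_cast Nat.factorial_ne_zero _
    field_simp
  · intro J
    simp [egf, bsum_zero]
  · ext1 k
    simp only [egf, coeff_mk, coeff_X]
    by_cases hk : k = 1
    · subst hk; simp [bsum_one]
    · simp [hk, bsum_univ]
  · intro J j hj
    ext1 N
    have h1 := egf_prod N (fun (k : Fin 3) n => bsum ((![J, {j}, {j}] : Fin 3 → Finset (Fin q)) k) (Fin n))
    have h2 := bsum_rec (V := Fin N) J j hj
    have h3 : ∀ (κ : Fin N → Fin 3) (k : Fin 3), bsum ((![J, {j}, {j}] : Fin 3 → Finset (Fin q)) k) {x // κ x = k} =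
        bsum ((![J, {j}, {j}] : Fin 3 → Finset (Fin q)) k) (Fin (Finset.univ.filter (fun x => κ x = k)).card) := by
      intro κ k
      apply bsum_congr
      exact Fintype.equivFinOfCardEq (Fintype.card_subtype _)
    simp only [h3] at h2
    rw [h1, Fin.prod_univ_three] at h2
    simp only [Matrix.cons_val_zero, Matrix.cons_val_one, Matrix.cons_val] at h2
    rw [map_add, coeff_C_mul, egf, coeff_mk, h2, mul_add]
    congr 1
    · simp [egf]
    · have : (N.factorial : ℚ) ≠ 0 := by exact_mod_cast Nat.factorial_ne_zero _
      have e : algebraMap ℚ (MvPolynomial (Fin q) ℚ) (1 / N.factorial) * (N.factorial : MvPolynomial (Fin q) ℚ) = 1 := by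
        have : (N.factorial : MvPolynomial (Fin q) ℚ) = algebraMap ℚ _ (N.factorial : ℚ) := by simp
        rw [this, ← map_mul, one_div_mul_cancel (by assumption), map_one]
      generalize algebraMap ℚ (MvPolynomial (Fin q) ℚ) (1 / N.factorial) = A at e ⊢
      rw [mul_left_comm, ← mul_assoc A, e, one_mul]
      rfl

section Full
variable {V : Type} [Fintype V] [DecidableEq V] {q : ℕ}

theorem full_cycle (w : Perm V) (hV : 2 ≤ Fintype.card V)
    (h : ∀ f : V → ℚ, f ∈ FixS w → ∀ x x', f x = f x') : w.cycleType = {Fintype.card V} := by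
  classical
  have hs : ∀ x x', SameCycle w x x' := by
    intro x x'
    have := h (fun u => if SameCycle w x u then 1 else 0) (fun u => by simp only [sameCycle_apply_right]) x x'
    simp only [SameCycle.refl, if_true] at this
    by_contra hne
    rw [if_neg hne] at this
    norm_num at this
  have hm : ∀ x, w x ≠ x := by
    intro x hx
    have : ∀ y, x = y := fun y => (SameCycle.eq_of_left (hs x y) hx)
    have : Fintype.card V = 1 := Fintype.card_eq_one_iff.mpr ⟨x, fun y => (this y).symm⟩
    omega
  have hv : Nonempty V := Fintype.card_pos_iff.mp (by omega)
  obtain ⟨v⟩ := hv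
  have hc : IsCycle w := ⟨v, hm v, fun y _ => hs v y⟩
  have hsup : w.support = Finset.univ := by
    ext x; simp [hm x]
  rw [hc.cycleType, hsup, Finset.card_univ]

theorem FixS_pow (w : Perm V) (f : V → ℚ) (h : f ∈ FixS w) (k : ℕ) (x : V) : f ((w ^ k) x) = f x := by
  induction k with
  | zero => rfl
  | succ k ih => rw [pow_succ', Perm.mul_apply, h, ih]

theorem full_fix (w : Perm V) (_hV : 2 ≤ Fintype.card V) (h : w.cycleType = {Fintype.card V})
    (f : V → ℚ) (hf : f ∈ FixS w) (x x' : V) : f x = f x' := by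
  have hc : IsCycle w := by rw [← card_cycleType_eq_one, h]; simp
  have hs : w.support = Finset.univ := by
    apply Finset.eq_univ_of_card
    have := hc.cycleType
    rw [h] at this
    exact (Multiset.singleton_inj.mp this).symm
  have hm : ∀ x, w x ≠ x := by
    intro x; rw [← mem_support, hs]; exact Finset.mem_univ _
  obtain ⟨i, hi⟩ := hc.exists_pow_eq (hm x) (hm x')
  rw [← hi, FixS_pow w f hf]

theorem Cact_prod (y : Fin q → Perm V) (hV : 2 ≤ Fintype.card V) (h : Cact y) :
    (List.ofFn y).prod.cycleType = {Fintype.card V} := by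
  have hv : Nonempty V := Fintype.card_pos_iff.mp (by omega)
  obtain ⟨v⟩ := hv
  apply full_cycle _ hV
  intro f hf
  apply h.2.1
  rw [← mem_FixL_ofFn]
  refine FixL_prod _ ?_ hf
  have := conn_dim y h.2.1 v
  rw [List.map_ofFn, List.sum_ofFn]
  have := h.2.2
  simp only [Function.comp]
  omega

open Classical in
/-- weighted factorizations -/
noncomputable def facs (q : ℕ) (w : Perm V) : MvPolynomial (Fin q) ℚ :=
  ∑ y ∈ Finset.univ.filter (fun y : Fin q → Perm V => Cact y ∧ (List.ofFn y).prod = w), wt y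

theorem facs_conj (w g : Perm V) : facs q (g * w * g⁻¹) = facs q w := by
  classical
  unfold facs
  symm
  have hpc : ∀ p : Perm V, Equiv.permCongr g p = g * p * g⁻¹ := by
    intro p; ext x; simp
  refine Finset.sum_equiv (Equiv.piCongrRight (fun _ => Equiv.permCongr g)) ?_ ?_
  · intro y
    simp only [Finset.mem_filter, Finset.mem_univ, true_and]
    refine and_congr (Cact_congr g y).symm ?_
    have : (List.ofFn ((Equiv.piCongrRight (fun _ : Fin q => Equiv.permCongr g)) y)).prod = g * (List.ofFn y).prod * g⁻¹ := by
      have := map_list_prod (MulAut.conj g) (List.ofFn y)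
      rw [MulAut.conj_apply, List.map_ofFn] at this
      rw [this]
      congr 2
    rw [this]
    simp
  · intro y _
    exact (wt_congr g y).symm

theorem bsum_facs (w : Perm V) (hV : 2 ≤ Fintype.card V) (hw : w.cycleType = {Fintype.card V}) :
    bsum (∅ : Finset (Fin q)) V = ((Fintype.card V).factorial : MvPolynomial (Fin q) ℚ) * facs q w := by
  classical
  have h1 : bsum (∅ : Finset (Fin q)) V = (Fintype.card V : MvPolynomial (Fin q) ℚ) *
      ∑ y ∈ Finset.univ.filter (fun y : Fin q → Perm V => Cact y), wt y := by
    unfold bsum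
    have : (Finset.univ.filter (fun p : (Fin q → Perm V) × V => Cact p.1 ∧ ∀ i ∈ (∅ : Finset (Fin q)), p.1 i p.2 = p.2)) =
      (Finset.univ.filter (fun y : Fin q → Perm V => Cact y)) ×ˢ (Finset.univ : Finset V) := by
      ext ⟨y, v⟩; simp
    rw [this, Finset.sum_product, Finset.mul_sum]
    simp
  have h2 : ∑ y ∈ Finset.univ.filter (fun y : Fin q → Perm V => Cact y), wt y =
      ∑ g ∈ Finset.univ.filter (fun g : Perm V => g.cycleType = {Fintype.card V}), facs q g := by
    rw [← Finset.sum_fiberwise_of_maps_to (t := Finset.univ.filter (fun g : Perm V => g.cycleType = {Fintype.card V})) (g := fun y => (List.ofFn y).prod)]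
    · apply Finset.sum_congr rfl
      intro g _
      unfold facs
      rw [Finset.filter_filter]
    · intro y hy
      simp only [Finset.mem_filter, Finset.mem_univ, true_and] at hy ⊢
      exact Cact_prod y hV hy
  have h3 : ∀ g ∈ Finset.univ.filter (fun g : Perm V => g.cycleType = {Fintype.card V}), facs q g = facs q w := by
    intro g hg
    simp only [Finset.mem_filter, Finset.mem_univ, true_and] at hg
    obtain ⟨c, hc⟩ := isConj_iff.mp (isConj_iff_cycleType_eq.mpr (hw.trans hg.symm))
    rw [← hc, facs_conj]
  rw [h1, h2, Finset.sum_congr rfl h3, Finset.sum_const, card_of_cycleType_singleton hV le_rfl, Nat.choose_self, mul_one,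
    nsmul_eq_mul, ← mul_assoc, ← Nat.cast_mul, Nat.mul_factorial_pred (by omega)]

theorem coeff_wt (y : Fin q → Perm V) (r : Fin q → ℕ) :
    MvPolynomial.coeff (Finsupp.equivFunOnFinite.symm r) (wt y) = if (∀ i, cod (y i) / 2 = r i) then 1 else 0 := by
  have : wt y = MvPolynomial.monomial (Finsupp.equivFunOnFinite.symm (fun i => cod (y i) / 2)) 1 := by
    rw [MvPolynomial.monomial_eq, Finsupp.prod_fintype _ _ (by simp)]
    simp [wt]
  rw [this, MvPolynomial.coeff_monomial]
  congr 1
  rw [Equiv.apply_eq_iff_eq, funext_iff]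

end Full

theorem count_main (n m : ℕ) (hn : 1 ≤ n) (r : Fin (m+1) → ℕ) (hr : ∑ i, r i = n) :
    ((2*n+1 : ℕ) : ℚ) * (Nat.card {y : Fin (m+1) → Perm (Fin (2*n+1)) // (List.ofFn y).prod = finRotate (2*n+1) ∧
        ∀ i, Good (y i) ∧ cod (y i) = 2 * r i} : ℚ) = ∏ i, (luc (2*n+1) (r i) : ℚ) := by
  classical
  have hrot : (finRotate (2*n+1)).cycleType = {Fintype.card (Fin (2*n+1))} := by
    rw [cycleType_finRotate_of_le (by omega), Fintype.card_fin]
  have hV : 2 ≤ Fintype.card (Fin (2*n+1)) := by rw [Fintype.card_fin]; omega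
  have h1 := bsum_main (m+1) (2*n) r (by rw [hr])
  rw [bsum_facs (finRotate (2*n+1)) hV hrot, Fintype.card_fin] at h1
  have e : ((2*n+1).factorial : MvPolynomial (Fin (m+1)) ℚ) = MvPolynomial.C ((2*n+1).factorial : ℚ) := by simp
  rw [e, MvPolynomial.coeff_C_mul] at h1
  have hf : ((2*n+1).factorial : ℚ) ≠ 0 := by exact_mod_cast Nat.factorial_ne_zero _
  rw [mul_left_comm] at h1
  rw [← mul_left_cancel₀ hf h1]
  congr 1
  unfold facs
  rw [MvPolynomial.coeff_sum]
  simp only [coeff_wt]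
  rw [Finset.sum_boole, Finset.filter_filter, Nat.card_eq_fintype_card, Fintype.card_subtype]
  congr 2
  ext y
  simp only [Finset.mem_filter, Finset.mem_univ, true_and]
  constructor
  · rintro ⟨h1, h2⟩
    refine ⟨⟨⟨fun i => (h2 i).1, ?_, ?_⟩, h1⟩, fun i => ?_⟩
    · intro f hf
      apply full_fix _ hV hrot
      rw [← h1]
      have hf' := (mem_FixL_ofFn y f).mpr hf
      clear hf h1 h2
      generalize List.ofFn y = l at hf'
      induction l with
      | nil => intro x; rfl
      | cons a l ih =>
        rw [FixL_cons] at hf'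
        rw [List.prod_cons]
        exact FixS_inf_le _ _ ⟨hf'.1, ih hf'.2⟩
    · simp only [fun i => (h2 i).2]
      rw [← Finset.mul_sum, hr, Fintype.card_fin]
    · rw [(h2 i).2]; omega
  · rintro ⟨⟨h1, h2⟩, h3⟩
    refine ⟨h2, fun i => ⟨h1.1 i, ?_⟩⟩
    have := Good_even _ (y i) (h1.1 i)
    have := h3 i
    omega

section Words
variable {V : Type} [Fintype V] [DecidableEq V]

theorem tau_three {a b c : V} (h1 : a ≠ b) (h2 : b ≠ c) (h3 : a ≠ c) : IsThreeCycle (tau a b c) := by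
  rw [tau, swap_comm a b]
  exact isThreeCycle_swap_mul_swap_same h1.symm h2 h3

theorem three_tau (t : Perm V) (ht : IsThreeCycle t) :
    ∃ a b c : V, a ≠ b ∧ b ≠ c ∧ a ≠ c ∧ t = tau a b c := by
  have h3 : t ^ 3 = 1 := by rw [← ht.orderOf]; exact pow_orderOf_eq_one t
  have h3' : ∀ x, t (t (t x)) = x := by
    intro x
    have := congrArg (fun s : Perm V => s x) h3
    simpa [pow_succ] using this
  have hg : Good t := by
    intro f hf
    ext x
    have e : f (t (t (t x))) = - f x := by rw [hf, hf, hf]; ring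
    rw [h3'] at e
    simp only [Pi.zero_apply]; linarith
  have hv : ∃ v, t v ≠ v := by
    by_contra hne
    push Not at hne
    exact ht.ne_one (Perm.ext hne)
  obtain ⟨v, hv⟩ := hv
  obtain ⟨h1, h2, h4, z, hz1, hz2, hz⟩ := Good_step t hg v hv
  refine ⟨v, t v, t (t v), h1, h2, h4, ?_⟩
  have hs : ({v, t v, t (t v)} : Finset V) = t.support := by
    apply Finset.eq_of_subset_of_card_le
    · intro x hx
      simp only [Finset.mem_insert, Finset.mem_singleton] at hx
      rcases hx with rfl | rfl | rfl
      · exact mem_support.mpr hv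
      · exact mem_support.mpr h2.symm
      · rw [mem_support, h3']; exact h4
    · rw [ht.card_support, Finset.card_eq_three.mpr ⟨v, t v, t (t v), h1, h4, h2, rfl⟩]
  ext x
  by_cases h5 : x = v
  · rw [h5, tau_1 h1 h4]
  by_cases h6 : x = t v
  · rw [h6, tau_2 h2 h4]
  by_cases h7 : x = t (t v)
  · rw [h7, tau_3, h3']
  rw [tau_4 h5 h6 h7]
  by_contra hne
  have : x ∈ t.support := mem_support.mpr hne
  rw [← hs] at this
  simp [h5, h6, h7] at this

theorem cod_tau {a b c : V} (h1 : a ≠ b) (h2 : b ≠ c) (h3 : a ≠ c) : cod (tau a b c) = 2 := by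
  have := cod_mul_tau (1 : Perm V) h1 h2 h3 rfl rfl
  rwa [one_mul, cod_one] at this

/-- being a product of k three-cycles -/
def Word (k : ℕ) (x : Perm V) : Prop := ∃ l : List (Perm V), (∀ t ∈ l, IsThreeCycle t) ∧ l.prod = x ∧ l.length = k

theorem Word_one : Word 0 (1 : Perm V) := ⟨[], by simp, rfl, rfl⟩

theorem Word_mul {j k : ℕ} {x y : Perm V} (hx : Word j x) (hy : Word k y) : Word (j + k) (x * y) := by
  obtain ⟨l, h1, h2, h3⟩ := hx
  obtain ⟨l', h1', h2', h3'⟩ := hy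
  refine ⟨l ++ l', ?_, by rw [List.prod_append, h2, h2'], by rw [List.length_append, h3, h3']⟩
  intro t ht
  rcases List.mem_append.mp ht with h | h
  · exact h1 t h
  · exact h1' t h

theorem Word_cod {k : ℕ} {x : Perm V} (hx : Word k x) : cod x ≤ 2 * k := by
  obtain ⟨l, h1, rfl, rfl⟩ := hx
  induction l with
  | nil => simp [cod_one]
  | cons t l ih =>
    rw [List.prod_cons, List.length_cons]
    have e1 := cod_mul_le t l.prod
    have e2 := ih (fun s hs => h1 s (by simp [hs]))
    obtain ⟨a, b, c, n1, n2, n3, e⟩ := three_tau t (h1 t (by simp))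
    have e3 := cod_tau n1 n2 n3
    rw [← e] at e3
    omega

theorem Word_sign {k : ℕ} {x : Perm V} (hx : Word k x) : sign x = 1 := by
  obtain ⟨l, h1, rfl, rfl⟩ := hx
  induction l with
  | nil => simp
  | cons t l ih =>
    rw [List.prod_cons, map_mul, (h1 t (by simp)).sign, ih (fun s hs => h1 s (by simp [hs])), one_mul]

theorem Word_of_sign (x : Perm V) (hx : sign x = 1) : ∃ k, Word k x := by
  have h : x ∈ alternatingGroup V := mem_alternatingGroup.mpr hx
  rw [← closure_three_cycles_eq_alternating] at h
  clear hx
  induction h using Subgroup.closure_induction with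
  | mem x hx => exact ⟨1, [x], by simpa using hx, by simp, rfl⟩
  | one => exact ⟨0, Word_one⟩
  | mul x y _ _ hx hy =>
    obtain ⟨j, hj⟩ := hx
    obtain ⟨k, hk⟩ := hy
    exact ⟨j + k, Word_mul hj hk⟩
  | inv x _ ih =>
    obtain ⟨k, l, h1, h2, h3⟩ := ih
    refine ⟨k, (l.map (·⁻¹)).reverse, ?_, ?_, by simp [h3]⟩
    · intro t ht
      simp only [List.mem_reverse, List.mem_map] at ht
      obtain ⟨s, hs, rfl⟩ := ht
      exact (h1 s hs).inv
    · rw [← h2, List.prod_inv_reverse]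

theorem Good_word (y : Perm V) (hy : Good y) : Word (cod y / 2) y := by
  induction h : cod y using Nat.strong_induction_on generalizing y with
  | _ n ih =>
    by_cases hv : ∃ v, y v ≠ v
    · obtain ⟨v, hv⟩ := hv
      obtain ⟨h1, h2, h3, z, hz1, hz2, hyz⟩ := Good_step y hy v hv
      have hc := cod_mul_tau z h1 h2 h3 hz1 hz2
      have hg := Good_mul_tau z h1 h2 h3 hz1 hz2
      rw [← hyz] at hc hg
      have := ih (cod z) (by omega) z (hg.mp hy) rfl
      have h1' : Word 1 (tau v (y v) (y (y v))) := ⟨[_], by simpa using tau_three h1 h2 h3, by simp, rfl⟩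
      have := Word_mul this h1'
      rw [← hyz] at this
      convert this using 1
      omega
    · push Not at hv
      have : y = 1 := Perm.ext hv
      rw [this, cod_one] at h
      rw [this, ← h]
      exact Word_one

theorem half (z : Perm V) (hz : Good z) (h : V → ℚ) (p : V) (G : ℚ)
    (hh : ∀ x, h (z x) + h x = if x = p then G else 0) : h p = G / 2 := by
  have e1 : ∑ x, h (z x) ^ 2 = ∑ x, h x ^ 2 := Equiv.sum_comp z (fun x => h x ^ 2)
  have e2 : ∀ x, h (z x) ^ 2 = h x ^ 2 + if x = p then G ^ 2 - 2 * G * h p else 0 := by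
    intro x
    have := hh x
    split_ifs at this ⊢ with hx
    · subst hx
      have : h (z x) = G - h x := by linarith
      rw [this]; ring
    · have : h (z x) = - h x := by linarith
      rw [this]; ring
  simp only [e2, Finset.sum_add_distrib, Finset.sum_ite_eq', Finset.mem_univ, if_true] at e1
  have e3 : G * (G - 2 * h p) = 0 := by linarith
  rcases mul_eq_zero.mp e3 with h0 | h0
  · have := hz h (fun x => by have := hh x; rw [h0] at this; simp at this; linarith)
    rw [this, h0]; simp
  · linarith

theorem Good_core (z : Perm V) {a b c : V} (h1 : a ≠ b) (h2 : b ≠ c) (h3 : a ≠ c) (hz : Good z)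
    (hc : cod (z * tau a b c) = cod z + 2) : Good (z * tau a b c) := by
  have htop : FixS z ⊔ FixS (tau a b c) = ⊤ := by
    apply inf_dim_eq
    have d1 := Submodule.finrank_mono (FixS_inf_le z (tau a b c))
    have d2 := fix_add_cod z
    have d3 := fix_add_cod (tau a b c)
    have d4 := fix_add_cod (z * tau a b c)
    rw [cod_tau h1 h2 h3] at d3
    omega
  have hex : ∀ p : V, ∃ e ∈ FixS z, ∀ u, u = a ∨ u = b ∨ u = c → e u = if u = p then 1 else 0 := by
    intro p
    have : (fun u => if u = p then (1 : ℚ) else 0) ∈ FixS z ⊔ FixS (tau a b c) := by rw [htop]; trivial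
    obtain ⟨e, he, e', he', hs⟩ := Submodule.mem_sup.mp this
    have k1 := he' a
    have k2 := he' b
    rw [tau_1 h1 h3] at k1
    rw [tau_2 h2 h3] at k2
    refine ⟨fun u => e u + e' a, fun x => by simp only [he x], ?_⟩
    intro u hu
    have := congrFun hs u
    simp only [Pi.add_apply] at this
    rw [← this]
    rcases hu with rfl | rfl | rfl
    · rfl
    · rw [k1]
    · rw [k2, k1]
  intro f hf
  have fa := hf a
  have fb := hf b
  have fc := hf c
  rw [Perm.mul_apply, tau_1 h1 h3] at fa
  rw [Perm.mul_apply, tau_2 h2 h3] at fb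
  rw [Perm.mul_apply, tau_3] at fc
  have fx : ∀ x, x ≠ a → x ≠ b → x ≠ c → f (z x) = - f x := by
    intro x n1 n2 n3
    have := hf x
    rwa [Perm.mul_apply, tau_4 n1 n2 n3] at this
  have key : ∀ p, p = a ∨ p = b ∨ p = c → f p = (f (z p) + f p) / 2 := by
    intro p hp
    obtain ⟨e, he, hu⟩ := hex p
    have ep : e p = 1 := by rw [hu p hp]; simp
    have := half z hz (fun x => f x * e x) p (f (z p) + f p) (fun x => by
      simp only [he x]
      split_ifs with hx
      · rw [hx, ep]; ring
      · by_cases ha : x = a ∨ x = b ∨ x = c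
        · rw [hu x ha, if_neg hx]; ring
        · push Not at ha
          rw [fx x ha.1 ha.2.1 ha.2.2]; ring)
    simpa [ep] using this
  have ka := key a (by simp)
  have kb := key b (by simp)
  have kc := key c (by simp)
  rw [fc] at ka
  rw [fa] at kb
  rw [fb] at kc
  have za : f a = 0 := by linarith
  have zb : f b = 0 := by linarith
  have zc : f c = 0 := by linarith
  apply hz f
  intro x
  by_cases n1 : x = a
  · rw [n1, fc, za, zc]
  by_cases n2 : x = b
  · rw [n2, fa, za, zb]
  by_cases n3 : x = c
  · rw [n3, fb, zb, zc]
  exact fx x n1 n2 n3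

theorem Word_good {k : ℕ} {x : Perm V} (hx : Word k x) (hc : cod x = 2 * k) : Good x := by
  obtain ⟨l, h1, rfl, rfl⟩ := hx
  induction l using List.reverseRecOn with
  | nil => exact Good_one
  | append_singleton l t ih =>
    rw [List.prod_append, List.prod_singleton] at hc ⊢
    rw [List.length_append, List.length_singleton] at hc
    obtain ⟨a, b, c, n1, n2, n3, rfl⟩ := three_tau t (h1 t (by simp))
    have hl : ∀ s ∈ l, IsThreeCycle s := fun s hs => h1 s (by simp [hs])
    have e1 := Word_cod ⟨l, hl, rfl, rfl⟩
    have e2 := cod_mul_le l.prod (tau a b c)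
    have e3 := cod_tau n1 n2 n3
    exact Good_core _ n1 n2 n3 (ih hl (by omega)) (by omega)
end Words

theorem lenT_le_of {N k : ℕ} {x : Perm (Fin N)} (h : Word k x) : lenT (threeCycles N) x ≤ k := Nat.sInf_le h

theorem lenT_word {N k : ℕ} {x : Perm (Fin N)} (h : Word k x) : Word (lenT (threeCycles N) x) x := by
  have := Nat.sInf_mem (s := {n | ∃ l : List (Perm (Fin N)), (∀ t ∈ l, t ∈ threeCycles N) ∧ l.prod = x ∧ l.length = n}) ⟨k, h⟩
  exact this

theorem lenT_pos {N : ℕ} {x : Perm (Fin N)} (h : lenT (threeCycles N) x ≠ 0) : sign x = 1 := by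
  by_contra hs
  apply h
  have : {n | ∃ l : List (Perm (Fin N)), (∀ t ∈ l, t ∈ threeCycles N) ∧ l.prod = x ∧ l.length = n} = ∅ := by
    rw [Set.eq_empty_iff_forall_notMem]
    intro k hk
    exact hs (Word_sign (k := k) hk)
  unfold lenT
  rw [this, Nat.sInf_empty]

theorem lenT_one {N : ℕ} : lenT (threeCycles N) 1 = 0 := Nat.le_zero.mp (lenT_le_of Word_one)

theorem cod_rot (n : ℕ) (hn : 1 ≤ n) : 2 * n ≤ cod (finRotate (2*n+1)) := by
  have h1 : Module.finrank ℚ (FixS (finRotate (2*n+1))) ≤ 1 := by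
    apply finrank_le_one (⟨fun _ => 1, fun x => rfl⟩ : FixS (finRotate (2*n+1)))
    rintro ⟨f, hf⟩
    refine ⟨f 0, ?_⟩
    ext x
    have := full_fix (finRotate (2*n+1)) (by rw [Fintype.card_fin]; omega)
      (by rw [cycleType_finRotate_of_le (by omega), Fintype.card_fin]) f hf 0 x
    simp [this]
  have h2 := fix_add_cod (finRotate (2*n+1))
  rw [Fintype.card_fin] at h2
  omega

/-- extended chain -/
def xch {G : Type} [Group G] {m : ℕ} (c : Fin m → G) (w : G) : Fin (m+2) → G := Fin.snoc (Fin.cons 1 c) w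

section Xch
variable {G : Type} [Group G] {m : ℕ}
theorem xch_zero (c : Fin m → G) (w : G) : xch c w 0 = 1 := by
  have : (0 : Fin (m+2)) = Fin.castSucc 0 := rfl
  rw [this, xch, Fin.snoc_castSucc, Fin.cons_zero]
theorem xch_last (c : Fin m → G) (w : G) : xch c w (Fin.last _) = w := by
  rw [xch, Fin.snoc_last]
theorem xch_mid (c : Fin m → G) (w : G) (i : Fin m) : xch c w i.succ.castSucc = c i := by
  rw [xch, Fin.snoc_castSucc, Fin.cons_succ]

theorem xch_cases (P : Fin (m+2) → Prop) (h0 : P 0) (hl : P (Fin.last _)) (hm : ∀ i : Fin m, P i.succ.castSucc) (k) : P k := by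
  induction k using Fin.lastCases with
  | last => exact hl
  | cast k =>
    induction k using Fin.cases with
    | zero => exact h0
    | succ i => exact hm i

theorem pp_last (y : Fin (m+1) → G) : Fin.partialProd y (Fin.last _) = (List.ofFn y).prod := by
  rw [Fin.partialProd, List.take_of_length_le (by simp)]

theorem xch_pp (c : Fin m → G) (w : G) (k : Fin (m+2)) :
    Fin.partialProd (fun i : Fin (m+1) => (xch c w i.castSucc)⁻¹ * xch c w i.succ) k = xch c w k := by
  have := congrFun (Fin.partialProd_left_inv (xch c w)) k
  rwa [xch_zero, one_smul] at this

theorem pp_xch (y : Fin (m+1) → G) (w : G) (h : (List.ofFn y).prod = w) (k : Fin (m+2)) :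
    xch (fun i => Fin.partialProd y i.succ.castSucc) w k = Fin.partialProd y k := by
  refine xch_cases (fun k => xch (fun i => Fin.partialProd y i.succ.castSucc) w k = Fin.partialProd y k) ?_ ?_ ?_ k
  · simp only [xch_zero, Fin.partialProd_zero]
  · simp only [xch_last, pp_last, h]
  · intro i; simp only [xch_mid]
end Xch

theorem ps_last {m : ℕ} (r : Fin (m+1) → ℕ) : Fin.partialSum r (Fin.last _) = ∑ i, r i := by
  rw [Fin.partialSum, List.take_of_length_le (by simp), List.sum_ofFn]

theorem chain_fwd (n m : ℕ) (hn : 1 ≤ n) (r : Fin (m+1) → ℕ) (hr : ∑ i, r i = n) (c : Fin m → Perm (Fin (2*n+1)))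
    (h1 : ∀ i j, i ≤ j → leT (threeCycles (2*n+1)) (c i) (c j))
    (h2 : ∀ i, leT (threeCycles (2*n+1)) (c i) (finRotate (2*n+1)))
    (h3 : ∀ i : Fin (m+1), lenT (threeCycles (2*n+1)) (xch c (finRotate (2*n+1)) i.castSucc) + r i
            = lenT (threeCycles (2*n+1)) (xch c (finRotate (2*n+1)) i.succ)) (i : Fin (m+1)) :
    Good ((xch c (finRotate (2*n+1)) i.castSucc)⁻¹ * xch c (finRotate (2*n+1)) i.succ) ∧
     cod ((xch c (finRotate (2*n+1)) i.castSucc)⁻¹ * xch c (finRotate (2*n+1)) i.succ) = 2 * r i := by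
  set w := finRotate (2*n+1) with hw
  set X := xch c w with hX
  have hS : ∀ k, lenT (threeCycles (2*n+1)) (X k) = Fin.partialSum r k := by
    intro k
    induction k using Fin.induction with
    | zero => rw [hX, xch_zero, lenT_one, Fin.partialSum_zero]
    | succ k ih => rw [← h3, ih, Fin.partialSum_succ]
  have hwn : lenT (threeCycles (2*n+1)) w = n := by
    have := hS (Fin.last _)
    rwa [hX, xch_last, ps_last, hr] at this
  have hws : sign w = 1 := lenT_pos (by rw [hwn]; omega)
  have hsg : ∀ k, sign (X k) = 1 := by
    refine xch_cases _ ?_ ?_ ?_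
    · rw [hX, xch_zero, map_one]
    · rw [hX, xch_last, hws]
    · intro i
      rw [hX, xch_mid]
      by_contra hne
      have e := h2 i
      unfold leT at e
      rw [hwn] at e
      have e1 : lenT (threeCycles (2*n+1)) (c i) = 0 := by
        by_contra h; exact hne (lenT_pos h)
      have e2 : lenT (threeCycles (2*n+1)) ((c i)⁻¹ * w) = 0 := by
        by_contra h
        have := lenT_pos h
        rw [map_mul, hws, mul_one, sign_inv] at this
        exact hne this
      omega
  have hle : ∀ j k, j ≤ k → leT (threeCycles (2*n+1)) (X j) (X k) := by
    have hone : ∀ x, leT (threeCycles (2*n+1)) 1 x := by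
      intro x; unfold leT; rw [lenT_one, inv_one, one_mul, zero_add]
    have hself : ∀ x, leT (threeCycles (2*n+1)) x x := by
      intro x; unfold leT; rw [inv_mul_cancel, lenT_one, add_zero]
    refine xch_cases _ ?_ ?_ ?_
    · intro k _; rw [hX, xch_zero]; exact hone _
    · intro k hk
      rw [Fin.last_le_iff.mp hk]; exact hself _
    · intro i
      refine xch_cases _ ?_ ?_ ?_
      · intro h; exfalso
        rw [Fin.le_def] at h; simp at h
      · intro _; rw [hX, xch_mid, xch_last]; exact h2 i
      · intro j hij
        rw [hX, xch_mid, xch_mid]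
        apply h1
        rw [Fin.le_def] at hij ⊢; simpa using hij
  set y : Fin (m+1) → Perm (Fin (2*n+1)) := fun i => (X i.castSucc)⁻¹ * X i.succ with hy
  have hlen : ∀ i, lenT (threeCycles (2*n+1)) (y i) = r i := by
    intro i
    have e1 := hle i.castSucc i.succ (Fin.castSucc_lt_succ).le
    have e2 := h3 i
    unfold leT at e1
    simp only [hy]
    omega
  have hword : ∀ i, Word (r i) (y i) := by
    intro i
    obtain ⟨k, hk⟩ := Word_of_sign (y i) (by simp only [hy]; rw [map_mul, sign_inv, hsg, hsg, one_mul])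
    have := lenT_word hk
    rwa [hlen] at this
  have hprod : (List.ofFn y).prod = w := by
    rw [← pp_last, hy, hX, xch_pp, xch_last]
  have hc : ∀ i ∈ (Finset.univ : Finset (Fin (m+1))), cod (y i) ≤ 2 * r i := fun i _ => Word_cod (hword i)
  have hsum : ∑ i, cod (y i) = ∑ i, 2 * r i := by
    apply le_antisymm (Finset.sum_le_sum hc)
    rw [← Finset.mul_sum, hr]
    have e1 := cod_prod_le (List.ofFn y)
    rw [hprod, List.map_ofFn, List.sum_ofFn] at e1
    exact (cod_rot n hn).trans e1
  have heq := (Finset.sum_eq_sum_iff_of_le hc).mp hsum i (Finset.mem_univ i)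
  exact ⟨Word_good (hword i) heq, heq⟩

theorem chain_bwd (n m : ℕ) (hn : 1 ≤ n) (r : Fin (m+1) → ℕ) (hr : ∑ i, r i = n) (y : Fin (m+1) → Perm (Fin (2*n+1)))
    (hprod : (List.ofFn y).prod = finRotate (2*n+1)) (hy : ∀ i, Good (y i) ∧ cod (y i) = 2 * r i) :
    (∀ j k : Fin (m+2), j ≤ k → leT (threeCycles (2*n+1)) (Fin.partialProd y j) (Fin.partialProd y k)) ∧
    ∀ i : Fin (m+1), lenT (threeCycles (2*n+1)) (Fin.partialProd y i.castSucc) + r i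
       = lenT (threeCycles (2*n+1)) (Fin.partialProd y i.succ) := by
  have hword : ∀ i, Word (r i) (y i) := by
    intro i
    have := Good_word (y i) (hy i).1
    rw [(hy i).2] at this
    convert this using 1
    omega
  have hup : ∀ j k : Fin (m+2), j ≤ k → ∃ d, Fin.partialSum r k = Fin.partialSum r j + d ∧
      Word d ((Fin.partialProd y j)⁻¹ * Fin.partialProd y k) := by
    intro j k
    induction k using Fin.induction with
    | zero =>
      intro h
      rw [Fin.le_zero_iff.mp h]
      exact ⟨0, rfl, by rw [inv_mul_cancel]; exact Word_one⟩
    | succ k ih =>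
      intro h
      rcases h.eq_or_lt with h | h
      · subst h
        exact ⟨0, rfl, by rw [inv_mul_cancel]; exact Word_one⟩
      · obtain ⟨d, h1, h2⟩ := ih (Fin.le_castSucc_iff.mpr h)
        refine ⟨d + r k, by rw [Fin.partialSum_succ, h1, add_assoc], ?_⟩
        rw [Fin.partialProd_succ, ← mul_assoc]
        exact Word_mul h2 (hword k)
  have hex : ∀ j k : Fin (m+2), j ≤ k → Fin.partialSum r k = Fin.partialSum r j +
      lenT (threeCycles (2*n+1)) ((Fin.partialProd y j)⁻¹ * Fin.partialProd y k) := by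
    intro j k hjk
    obtain ⟨d, h1, h2⟩ := hup j k hjk
    obtain ⟨d0, h01, h02⟩ := hup 0 j (Fin.zero_le _)
    obtain ⟨d', h1', h2'⟩ := hup k (Fin.last _) (Fin.le_last _)
    rw [ps_last, hr] at h1'
    rw [Fin.partialSum_zero] at h01
    have e1 := lenT_le_of h2
    have e2 := Word_cod (Word_mul (Word_mul h02 (lenT_word h2)) h2')
    have e3 : (Fin.partialProd y 0)⁻¹ * Fin.partialProd y j * ((Fin.partialProd y j)⁻¹ * Fin.partialProd y k) *
        ((Fin.partialProd y k)⁻¹ * Fin.partialProd y (Fin.last _)) = finRotate (2*n+1) := by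
      rw [Fin.partialProd_zero, pp_last, hprod]; group
    rw [e3] at e2
    have e4 := cod_rot n hn
    omega
  have hlen : ∀ k, lenT (threeCycles (2*n+1)) (Fin.partialProd y k) = Fin.partialSum r k := by
    intro k
    have := hex 0 k (Fin.zero_le _)
    rw [Fin.partialSum_zero, zero_add, Fin.partialProd_zero, inv_one, one_mul] at this
    exact this.symm
  refine ⟨?_, ?_⟩
  · intro j k hjk
    unfold leT
    rw [hlen, hlen, hex j k hjk]
  · intro i
    rw [hlen, hlen, Fin.partialSum_succ]

theorem chain_card (n m : ℕ) (hn : 1 ≤ n) (r : Fin (m+1) → ℕ) (hr : ∑ i, r i = n) :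
    Nat.card {c : Fin m → Perm (Fin (2*n+1)) //
        (∀ i j, i ≤ j → leT (threeCycles (2*n+1)) (c i) (c j)) ∧
        (∀ i, leT (threeCycles (2*n+1)) (c i) (finRotate (2*n+1))) ∧
        (∀ i : Fin (m+1),
          lenT (threeCycles (2*n+1)) (xch c (finRotate (2*n+1)) i.castSucc) + r i
            = lenT (threeCycles (2*n+1)) (xch c (finRotate (2*n+1)) i.succ))} =
    Nat.card {y : Fin (m+1) → Perm (Fin (2*n+1)) // (List.ofFn y).prod = finRotate (2*n+1) ∧
        ∀ i, Good (y i) ∧ cod (y i) = 2 * r i} := by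
  refine Nat.card_eq_of_bijective (fun c => ⟨fun i => (xch c.1 (finRotate (2*n+1)) i.castSucc)⁻¹ * xch c.1 (finRotate (2*n+1)) i.succ, ?_, ?_⟩) ⟨?_, ?_⟩
  · rw [← pp_last, xch_pp, xch_last]
  · exact chain_fwd n m hn r hr c.1 c.2.1 c.2.2.1 c.2.2.2
  · rintro ⟨c, hc⟩ ⟨c', hc'⟩ e
    have e' := congrArg Subtype.val e
    simp only at e'
    apply Subtype.ext
    funext i
    have h1 := xch_pp c (finRotate (2*n+1)) i.succ.castSucc
    have h2 := xch_pp c' (finRotate (2*n+1)) i.succ.castSucc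
    rw [e', h2, xch_mid, xch_mid] at h1
    exact h1.symm
  · rintro ⟨y, hy1, hy2⟩
    obtain ⟨b1, b2⟩ := chain_bwd n m hn r hr y hy1 hy2
    have hx := pp_xch y _ hy1
    refine ⟨⟨fun i => Fin.partialProd y i.succ.castSucc, ?_, ?_, ?_⟩, ?_⟩
    · intro i j hij
      apply b1
      rw [Fin.le_def] at hij ⊢; simpa using hij
    · intro i
      rw [← hy1, ← pp_last]
      exact b1 _ _ (Fin.le_last _)
    · intro i
      rw [hx, hx]; exact b2 i
    · apply Subtype.ext
      funext i
      simp only [hx, Fin.partialProd_right_inv]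


theorem stmt14 (n m : ℕ) (hn : 1 ≤ n) (r : Fin (m+1) → ℕ) (hr : ∑ i, r i = n) :
    (Nat.card {c : Fin m → Perm (Fin (2*n+1)) //
        (∀ i j, i ≤ j → leT (threeCycles (2*n+1)) (c i) (c j)) ∧
        (∀ i, leT (threeCycles (2*n+1)) (c i) (finRotate (2*n+1))) ∧
        (∀ i : Fin (m+1),
          lenT (threeCycles (2*n+1))
              ((Fin.snoc (Fin.cons 1 c) (finRotate (2*n+1)) :
                  Fin (m+2) → Perm (Fin (2*n+1))) i.castSucc) + r i
            = lenT (threeCycles (2*n+1))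
              ((Fin.snoc (Fin.cons 1 c) (finRotate (2*n+1)) :
                  Fin (m+2) → Perm (Fin (2*n+1))) i.succ))} : ℚ)
    = (2*n+1 : ℚ) ^ m *
        ∏ i : Fin (m+1),
          (1 / (2*n+1 - (r i : ℚ))) * (Nat.choose (2*n+1 - r i) (r i) : ℚ) := by
  have h1 := chain_card n m hn r hr
  have h2 := count_main n m hn r hr
  rw [← h1] at h2
  have hN : ((2*n+1 : ℕ) : ℚ) = 2*n+1 := by push_cast; ring
  have hN0 : (2*n+1 : ℚ) ≠ 0 := by positivity
  have hl : ∀ i, (luc (2*n+1) (r i) : ℚ) = (2*n+1) * ((1 / (2*n+1 - (r i : ℚ))) * (Nat.choose (2*n+1 - r i) (r i) : ℚ)) := by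
    intro i
    have hri : r i ≤ n := by
      rw [← hr]; exact Finset.single_le_sum (fun _ _ => Nat.zero_le _) (Finset.mem_univ i)
    have e := luc_eq (2*n+1) (r i) (by omega)
    have e' := congrArg (Nat.cast : ℕ → ℚ) e
    rw [Nat.cast_mul, Nat.cast_mul, Nat.cast_sub (by omega), hN] at e'
    have hr' : (r i : ℚ) ≤ n := by exact_mod_cast hri
    have hpos : (2*n+1 - (r i : ℚ)) ≠ 0 := by
      have : (0:ℚ) ≤ n := by positivity
      have : (0:ℚ) < 2*n+1 - (r i : ℚ) := by linarith
      exact this.ne'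
    field_simp
    linarith
  rw [Finset.prod_congr rfl (fun i _ => hl i), Finset.prod_mul_distrib, Finset.prod_const, Finset.card_univ, Fintype.card_fin,
    hN, pow_succ', mul_assoc] at h2
  exact mul_left_cancel₀ hN0 h2
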